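/- Let F be a field that is an algebraic extension of a finite field (equivalently, F is algebraic over its prime subfield, which has positive characteristic) and let n ≥ 3. Then every matrix in SL_n(F[X]) is a product of at most (3n² − n)/2 + 29 elementary matrices. -/

import Mathlib

/-!
Splitting off a corner `1` from a matrix in `SL_k(F[X])` costs at most `3k - 2` transvections
(`reduce`): `F[X]` is a principal ideal domain, so one row operation makes the entries below the
corner of the first column unimodular, and `3 (k - 1)` more produce the corner `1` and clear its
column and row. Doing this for `k = n, …, 3` leaves a block `1 ⊕ A` with `A ∈ SL₂(F[X])`, and
`∑_{k=3}^n (3k - 2) + 34 = (3n² - n) / 2 + 29`. It remains to write `1 ⊕ A` as a product of 34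
transvections in `SL₃(F[X])`. Only finitely many coefficients occur, so `F` may be taken to be a
finite field with `q` elements (`elemProd_of_isAlgebraic`).

*The powers of `A`.* Let `A` have first row `(a, b)` and lower left entry `c`. By Cayley--Hamilton
`A ^ k = f + g A`, where `g ∣ (f - 1) (f + 1)` and the corner is `a ^ k` modulo `b`. If
`a ^ k ≡ 1` modulo `b`, a splitting of `g` into divisors of `f - 1` and `f + 1` permits two
swindles that move `g` from the upper right to the lower left, and `1 ⊕ A ^ k` is, up to a sign
matrix, a product of 15 transvections (`elemProd_pow`). If `a ^ (l + 1) ≡ 1` modulo `b` and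
`a ^ l ≡ 1` modulo `c`, then `A = A ^ (l + 1) (A ^ l)⁻¹` needs 30 of them (`elemProd_thirty`).

*Finding the exponent.* At most two operations make `a` monic of degree congruent to `1` modulo
`q - 1`. By Dirichlet's theorem in `F[X]`, two more replace `b` by `β P` and `c` by `Q`, where `P`
and `Q` are monic irreducible of distinct large prime degrees. The norm of `a` modulo `P` is the
resultant `Res(P, a)`, which depends only on `β` and on `b` modulo `a`; the degree of `a` allows a
choice of `β` for which it is `1`. Hence `a` has order dividing `(q ^ deg P - 1) / (q - 1)` modulo
`P` and dividing `q ^ deg Q - 1` modulo `Q`. These numbers are coprime, so they have consecutive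
multiples (`elemProd_of_monic`).

*Dirichlet's theorem* (`exists_prime_modEq`). For a nontrivial character modulo `a` the `L`-function
is a polynomial, and the sums of the character over weighted prime powers of degree `n` are the
coefficients of its logarithmic derivative. After rescaling by `q ^ n` these are bounded by `1`, so
the `L`-function has no zero in the open unit disc; a zero on the boundary is excluded by a
positivity argument, so the rescaled coefficients tend to zero. By orthogonality of characters the
prime powers of degree `n` are equidistributed among the invertible classes modulo `a`. When `n` is
prime these are irreducible polynomials of degree `n`, apart from the contribution of linear ones.
-/

/-- An elementary matrix (transvection) in `SL_n(R)`: a matrix that differs from the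
identity matrix in at most one off-diagonal entry. -/
def IsElementary {n : ℕ} {R : Type*} [CommRing R]
    (E : Matrix.SpecialLinearGroup (Fin n) R) : Prop :=
  ∃ (i j : Fin n) (c : R), i ≠ j ∧
    (E : Matrix (Fin n) (Fin n) R) = Matrix.transvection i j c

/-! ### Products of a bounded number of transvections -/

section ElemProd

open Matrix

/-- `ElemProd k M` means that the square matrix `M` is a product of at most `k` transvections.
The index type is arbitrary, and membership in `SL` is not part of the definition, since a product
of transvections automatically has determinant one. -/
def ElemProd {ι R : Type*} [Fintype ι] [DecidableEq ι] [CommRing R] (k : ℕ)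
    (M : Matrix ι ι R) : Prop :=
  ∃ L : List (Matrix ι ι R), L.length ≤ k ∧
    (∀ E ∈ L, ∃ (i j : ι) (c : R), i ≠ j ∧ E = transvection i j c) ∧ L.prod = M

namespace ElemProd

variable {ι R : Type*} [Fintype ι] [DecidableEq ι] [CommRing R] {k l : ℕ} {M N : Matrix ι ι R}

lemma one (k : ℕ) : ElemProd k (1 : Matrix ι ι R) := ⟨[], by simp, by simp, by simp⟩

lemma of_transvection {i j : ι} (h : i ≠ j) (c : R) : ElemProd 1 (transvection i j c) :=
  ⟨[transvection i j c], by simp, by simpa using ⟨i, j, h, c, rfl⟩, by simp⟩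

lemma mono (h : ElemProd k M) (hkl : k ≤ l) : ElemProd l M := by
  obtain ⟨L, h1, h2, h3⟩ := h
  exact ⟨L, h1.trans hkl, h2, h3⟩

lemma mul (hM : ElemProd k M) (hN : ElemProd l N) : ElemProd (k + l) (M * N) := by
  obtain ⟨L, h1, h2, h3⟩ := hM
  obtain ⟨L', h1', h2', h3'⟩ := hN
  refine ⟨L ++ L', by simp; omega, ?_, by simp [h3, h3']⟩
  intro E hE
  rcases List.mem_append.1 hE with h | h
  exacts [h2 E h, h2' E h]

/-- Induction along the list of factors: a property of pairs `(k, M)` that holds for `1` and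
is stable under multiplication by a transvection on the left holds for all products of
transvections. -/
lemma induct {P : ℕ → Matrix ι ι R → Prop} (h1 : ∀ k, P k 1)
    (hs : ∀ (k : ℕ) (M : Matrix ι ι R) (i j : ι) (c : R), i ≠ j → P k M →
      P (k + 1) (transvection i j c * M)) (hM : ElemProd k M) : P k M := by
  obtain ⟨L, hk, h2, rfl⟩ := hM
  induction L generalizing k with
  | nil => simpa using h1 k
  | cons E L ih =>
    obtain ⟨i, j, c, hij, rfl⟩ := h2 _ List.mem_cons_self
    obtain ⟨k, rfl⟩ : ∃ k', k = k' + 1 := ⟨k - 1, by simp at hk; omega⟩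
    rw [List.prod_cons]
    exact hs _ _ _ _ _ hij (ih (by simpa using hk) fun E hE => h2 E (List.mem_cons_of_mem _ hE))

lemma exists_inv (hM : ElemProd k M) :
    ∃ N, ElemProd k N ∧ N * M = 1 ∧ M * N = 1 := by
  refine induct (P := fun k M => ∃ N, ElemProd k N ∧ N * M = 1 ∧ M * N = 1)
    (fun k => ⟨1, one k, by simp, by simp⟩) ?_ hM
  rintro k M i j c hij ⟨N, hN, h1, h2⟩
  refine ⟨N * transvection i j (-c), hN.mul (of_transvection hij _), ?_, ?_⟩
  · rw [Matrix.mul_assoc, ← Matrix.mul_assoc (transvection i j (-c)),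
      transvection_mul_transvection_same _ _ hij]
    simp [h1]
  · rw [Matrix.mul_assoc, ← Matrix.mul_assoc M, h2, Matrix.one_mul,
      transvection_mul_transvection_same _ _ hij]
    simp

lemma left {i j : ι} (hij : i ≠ j) (c : R) (h : ElemProd k (transvection i j c * M)) :
    ElemProd (k + 1) M := by
  have := (of_transvection hij (-c)).mul h
  rw [← Matrix.mul_assoc, transvection_mul_transvection_same _ _ hij] at this
  simpa [add_comm] using this

lemma right {i j : ι} (hij : i ≠ j) (c : R) (h : ElemProd k (M * transvection i j c)) :
    ElemProd (k + 1) M := by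
  have := h.mul (of_transvection hij (-c))
  rw [Matrix.mul_assoc, transvection_mul_transvection_same _ _ hij] at this
  simpa using this

lemma transpose (hM : ElemProd k M) : ElemProd k Mᵀ := by
  refine induct (P := fun k M => ElemProd k Mᵀ) (fun k => by simpa using one k) ?_ hM
  intro k M i j c hij h
  have e : (transvection i j c)ᵀ = transvection j i c := by
    simp [transvection, transpose_add]
  rw [transpose_mul, e]
  exact h.mul (of_transvection hij.symm c)

/-- A diagonal sign matrix normalizes the set of transvections. -/
lemma conj {D : ι → R} (hD : ∀ i, D i * D i = 1) (hM : ElemProd k M) :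
    ElemProd k (diagonal D * M * diagonal D) := by
  have hDD : diagonal D * diagonal D = 1 := by simp [hD]
  refine induct (P := fun k M => ElemProd k (diagonal D * M * diagonal D))
    (fun k => by simpa [hDD] using one k) ?_ hM
  intro k M i j c hij h
  have e : diagonal D * (transvection i j c * M) * diagonal D
      = transvection i j (D i * c * D j) * (diagonal D * M * diagonal D) := by
    have : diagonal D * transvection i j c = transvection i j (D i * c * D j) * diagonal D := by
      ext a b
      simp only [transvection, diagonal_mul, mul_diagonal, Matrix.add_apply, Matrix.one_apply,
        Matrix.single_apply]
      by_cases h : i = a ∧ j = b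
      · obtain ⟨rfl, rfl⟩ := h
        simp [hij, mul_assoc, hD]
      · rw [if_neg h, if_neg h]
        by_cases hab : a = b <;> simp [hab]
    rw [← Matrix.mul_assoc, this]
    simp only [Matrix.mul_assoc]
  rw [e, add_comm]
  exact (of_transvection hij _).mul h

lemma dleft {D : ι → R} (hD : ∀ i, D i * D i = 1) {i j : ι} (hij : i ≠ j) (c : R)
    (h : ElemProd k (diagonal D * (transvection i j c * M))) :
    ElemProd (k + 1) (diagonal D * M) := by
  have hDD : diagonal D * diagonal D = 1 := by simp [hD]
  have := ((of_transvection hij (-c)).conj hD).mul h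
  rw [← Matrix.mul_assoc, Matrix.mul_assoc _ _ (diagonal D), hDD, Matrix.mul_one,
    ← Matrix.mul_assoc, Matrix.mul_assoc (diagonal D),
    transvection_mul_transvection_same _ _ hij] at this
  simpa [add_comm] using this

lemma dright {D : ι → R} {i j : ι} (hij : i ≠ j) (c : R)
    (h : ElemProd k (diagonal D * (M * transvection i j c))) :
    ElemProd (k + 1) (diagonal D * M) := by
  rw [← Matrix.mul_assoc] at h
  exact right hij c h

lemma map {S : Type*} [CommRing S] (φ : R →+* S) (hM : ElemProd k M) :
    ElemProd k (M.map φ) := by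
  refine induct (P := fun k M => ElemProd k (M.map φ)) (fun k => by
    simpa using one k) ?_ hM
  intro k M i j c hij h
  have e : (transvection i j c).map φ = transvection i j (φ c) := by
    ext a b
    simp [transvection, Matrix.one_apply, Matrix.single_apply, apply_ite φ]
  rw [Matrix.map_mul, e, add_comm]
  exact (of_transvection hij _).mul h

end ElemProd

/-! ### Reduction from size `n + 1` to size `n` -/

/-- The block matrix `1 ⊕ B`, with the new coordinate placed first. -/
def oneSum {n : ℕ} {R : Type*} [CommRing R] (B : Matrix (Fin n) (Fin n) R) :
    Matrix (Fin (n + 1)) (Fin (n + 1)) R :=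
  Matrix.of (Fin.cons (Fin.cons 1 0) fun i => Fin.cons 0 (B i))

section oneSum

variable {n : ℕ} {R : Type*} [CommRing R] (A B : Matrix (Fin n) (Fin n) R)

@[simp] lemma oneSum_zero_zero : oneSum B 0 0 = 1 := rfl
@[simp] lemma oneSum_zero_succ (j : Fin n) : oneSum B 0 j.succ = 0 := rfl
@[simp] lemma oneSum_succ_zero (i : Fin n) : oneSum B i.succ 0 = 0 := rfl
@[simp] lemma oneSum_succ_succ (i j : Fin n) : oneSum B i.succ j.succ = B i j := rfl

lemma oneSum_mul : oneSum (A * B) = oneSum A * oneSum B := by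
  ext i j
  refine Fin.cases ?_ (fun i => ?_) i <;> refine Fin.cases ?_ (fun j => ?_) j <;>
    simp [Matrix.mul_apply, Fin.sum_univ_succ]

lemma oneSum_one : oneSum (1 : Matrix (Fin n) (Fin n) R) = 1 := by
  ext i j
  refine Fin.cases ?_ (fun i => ?_) i <;> refine Fin.cases ?_ (fun j => ?_) j <;>
    simp [Matrix.one_apply, Fin.succ_ne_zero, (Fin.succ_ne_zero _).symm]

lemma det_oneSum : (oneSum B).det = B.det := by
  rw [Matrix.det_succ_row_zero, Fin.sum_univ_succ]
  simp
  congr 1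

lemma oneSum_transvection (i j : Fin n) (c : R) :
    oneSum (transvection i j c) = transvection i.succ j.succ c := by
  ext a b
  refine Fin.cases ?_ (fun a => ?_) a <;> refine Fin.cases ?_ (fun b => ?_) b <;>
    simp [transvection, Matrix.one_apply, Matrix.single_apply, Fin.succ_ne_zero,
      (Fin.succ_ne_zero _).symm]

lemma ElemProd.oneSum {k : ℕ} {B : Matrix (Fin n) (Fin n) R} (h : ElemProd k B) :
    ElemProd k (oneSum B) := by
  refine induct (P := fun k B => ElemProd k (_root_.oneSum B))
    (fun k => by simpa [oneSum_one] using one k) ?_ h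
  intro k M i j c hij h
  rw [oneSum_mul, oneSum_transvection, Nat.add_comm k 1]
  exact (of_transvection (by simpa using hij) _).mul h

lemma eq_oneSum (N : Matrix (Fin (n + 1)) (Fin (n + 1)) R) (h0 : N 0 0 = 1)
    (h1 : ∀ j : Fin n, N 0 j.succ = 0) (h2 : ∀ i : Fin n, N i.succ 0 = 0) :
    N = _root_.oneSum (N.submatrix Fin.succ Fin.succ) := by
  ext i j
  refine Fin.cases ?_ (fun i => ?_) i <;> refine Fin.cases ?_ (fun j => ?_) j <;>
    simp [h0, h1, h2]

end oneSum

section Reduction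

variable {n : ℕ} {R : Type*} [CommRing R]

/-- The unipotent matrix with first row `(1, x)` and the identity below. -/
def rowMat (x : Fin n → R) : Matrix (Fin (n + 1)) (Fin (n + 1)) R :=
  1 + ∑ i, Matrix.single 0 i.succ (x i)

lemma ElemProd.rowMat (x : Fin n → R) : ElemProd n (rowMat x) := by
  have key : ∀ s : Finset (Fin n), ElemProd s.card
      ((1 : Matrix (Fin (n + 1)) (Fin (n + 1)) R) + ∑ i ∈ s, Matrix.single 0 i.succ (x i)) := by
    intro s
    induction s using Finset.induction_on with
    | empty => simpa using one 0
    | insert a s ha ih =>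
      have e : (1 : Matrix (Fin (n + 1)) (Fin (n + 1)) R)
          + ∑ i ∈ insert a s, Matrix.single 0 i.succ (x i)
          = (1 + ∑ i ∈ s, Matrix.single 0 i.succ (x i)) * transvection 0 a.succ (x a) := by
        have h0 : ∀ i : Fin n, Matrix.single (0 : Fin (n + 1)) i.succ (x i) *
            Matrix.single 0 a.succ (x a) = 0 := fun i =>
          Matrix.single_mul_single_of_ne _ _ _ _ (Fin.succ_ne_zero i) _
        rw [Finset.sum_insert ha, transvection, mul_add, mul_one, add_mul, one_mul,
          Finset.sum_mul, Finset.sum_congr rfl fun i _ => h0 i]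
        simp
        abel
      rw [e, Finset.card_insert_of_notMem ha]
      exact ih.mul (of_transvection (Fin.succ_ne_zero a).symm _)
  simpa [_root_.rowMat] using key Finset.univ

lemma rowMat_mul_zero (x : Fin n → R) (M : Matrix (Fin (n + 1)) (Fin (n + 1)) R)
    (j : Fin (n + 1)) : (rowMat x * M) 0 j = M 0 j + ∑ i, x i * M i.succ j := by
  simp [rowMat, add_mul, Finset.sum_mul, Matrix.sum_apply, Matrix.add_apply]

lemma mul_rowMat_zero (x : Fin n → R) (M : Matrix (Fin (n + 1)) (Fin (n + 1)) R)
    (i : Fin (n + 1)) : (M * rowMat x) i 0 = M i 0 := by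
  simp [rowMat, mul_add, Finset.mul_sum, Matrix.sum_apply, Matrix.add_apply,
    (Fin.succ_ne_zero _).symm]

lemma mul_rowMat_succ (x : Fin n → R) (M : Matrix (Fin (n + 1)) (Fin (n + 1)) R)
    (i : Fin (n + 1)) (j : Fin n) : (M * rowMat x) i j.succ = M i j.succ + M i 0 * x j := by
  rw [rowMat, mul_add, mul_one, Finset.mul_sum, Matrix.add_apply, Matrix.sum_apply,
    Finset.sum_eq_single j]
  · simp
  · intro b _ hb
    rw [Matrix.mul_single_apply_of_ne]
    simpa using hb.symm
  · simp

lemma ElemProd.det {ι : Type*} [Fintype ι] [DecidableEq ι] {k : ℕ} {M : Matrix ι ι R}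
    (h : ElemProd k M) : M.det = 1 := by
  refine induct (P := fun _ M => M.det = 1) (fun k => by simp) ?_ h
  intro k M i j c hij h
  rw [Matrix.det_mul, h, det_transvection_of_ne _ _ hij, one_mul]

/-- If the entries of the first column below the corner generate the unit ideal, then `3 n`
elementary operations split off a corner `1`: `n` to produce the `1`, `n` to clear the column and
`n` to clear the row. -/
lemma reduce_of_unimodular (M : Matrix (Fin (n + 1)) (Fin (n + 1)) R) (hdet : M.det = 1)
    (x : Fin n → R) (hx : ∑ i, x i * M i.succ 0 = 1) {k : ℕ}
    (H : ∀ B : Matrix (Fin n) (Fin n) R, B.det = 1 → ElemProd k (oneSum B)) :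
    ElemProd (k + 3 * n) M := by
  set U := rowMat fun i => (1 - M 0 0) * x i with hU
  have hUe : ElemProd n U := ElemProd.rowMat _
  set M1 := U * M with hM1
  have h00 : M1 0 0 = 1 := by
    rw [hM1, hU, rowMat_mul_zero]
    simp only [mul_assoc, ← Finset.mul_sum, hx]
    ring
  set V := (rowMat fun i => - M1 i.succ 0)ᵀ with hV
  have hVe : ElemProd n V := (ElemProd.rowMat _).transpose
  set M2 := V * M1 with hM2
  have hM2t : M2ᵀ = M1ᵀ * rowMat fun i => - M1 i.succ 0 := by
    rw [hM2, hV, Matrix.transpose_mul, Matrix.transpose_transpose]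
  have h2 : ∀ i j, M2 i j = M2ᵀ j i := fun i j => rfl
  have h200 : M2 0 0 = 1 := by
    rw [h2, hM2t, mul_rowMat_zero]
    exact h00
  have h2c : ∀ i : Fin n, M2 i.succ 0 = 0 := by
    intro i
    rw [h2, hM2t, mul_rowMat_succ]
    simp [h00]
  set W := rowMat fun j => - M2 0 j.succ with hW
  have hWe : ElemProd n W := ElemProd.rowMat _
  set M3 := M2 * W with hM3
  have h3 : M3 = oneSum (M3.submatrix Fin.succ Fin.succ) := by
    apply eq_oneSum
    · rw [hM3, hW, mul_rowMat_zero, h200]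
    · intro j
      rw [hM3, hW, mul_rowMat_succ, h200]
      simp
    · intro i
      rw [hM3, hW, mul_rowMat_zero, h2c]
  have hd3 : (M3.submatrix Fin.succ Fin.succ).det = 1 := by
    rw [← det_oneSum, ← h3, hM3, hM2, hM1]
    simp [Matrix.det_mul, hUe.det, hVe.det, hWe.det, hdet]
  have hE3 := H _ hd3
  rw [← h3] at hE3
  obtain ⟨U', hU', hU1, -⟩ := hUe.exists_inv
  obtain ⟨V', hV', hV1, -⟩ := hVe.exists_inv
  obtain ⟨W', hW', -, hW1⟩ := hWe.exists_inv
  have e : M = U' * (V' * (M3 * W')) := by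
    rw [hM3, Matrix.mul_assoc, hW1, Matrix.mul_one, hM2, ← Matrix.mul_assoc V', hV1,
      Matrix.one_mul, hM1, ← Matrix.mul_assoc, hU1, Matrix.one_mul]
  rw [e]
  exact (hU'.mul (hV'.mul (hE3.mul hW'))).mono (by omega)

/-- Stable-range property of a principal ideal domain: if `x`, `y` and `g ≠ 0` have no common prime
factor, then `x + t y` is coprime to `g` for some `t`.  The proof adds the prime factors of `g` one
at a time, correcting `t` by the part of `g` already treated when necessary. -/
lemma exists_isCoprime_add_mul [IsDomain R] [IsPrincipalIdealRing R] (x y g : R) (hg : g ≠ 0)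
    (h : ∀ p : R, Prime p → p ∣ x → p ∣ y → p ∣ g → False) :
    ∃ t, IsCoprime (x + t * y) g := by
  induction g using UniqueFactorizationMonoid.induction_on_prime with
  | h₁ => exact absurd rfl hg
  | h₂ u hu => exact ⟨0, isCoprime_one_right.of_isCoprime_of_dvd_right hu.dvd⟩
  | h₃ g p hg0 hp ih =>
    obtain ⟨t, ht⟩ := ih hg0 fun q hq h1 h2 h3 => h q hq h1 h2 (h3.mul_left p)
    by_cases hpt : p ∣ x + t * y
    · refine ⟨t + g, IsCoprime.mul_right ?_ ?_⟩
      · refine ((Irreducible.coprime_iff_not_dvd hp.irreducible).2 ?_).symm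
        intro hd
        have h1 : p ∣ g * y := by
          have := dvd_sub hd hpt
          rwa [show x + (t + g) * y - (x + t * y) = g * y by ring] at this
        rcases hp.dvd_or_dvd h1 with h2 | h2
        · exact hp.not_isUnit (ht.isUnit_of_dvd' hpt h2)
        · refine h p hp ?_ h2 (dvd_mul_right p g)
          simpa using dvd_sub hpt (h2.mul_left t)
      · have : x + (t + g) * y = (x + t * y) + g * y := by ring
        rw [this]
        exact IsCoprime.add_mul_left_left ht y
    · exact ⟨t, IsCoprime.mul_right
        ((Irreducible.coprime_iff_not_dvd hp.irreducible).2 hpt).symm ht⟩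

/-- Over a principal ideal domain, one row operation makes the first column below the corner
unimodular, and `3 n` more split off a corner `1`. If all entries below the second one vanish, the
operation instead adds the corner to the third entry. -/
lemma reduce [IsDomain R] [IsPrincipalIdealRing R] (hn : 2 ≤ n)
    (M : Matrix (Fin (n + 1)) (Fin (n + 1)) R) (hdet : M.det = 1) {k : ℕ}
    (H : ∀ B : Matrix (Fin n) (Fin n) R, B.det = 1 → ElemProd k (oneSum B)) :
    ElemProd (k + (3 * n + 1)) M := by
  obtain ⟨n, rfl⟩ : ∃ m, n = m + 2 := ⟨n - 2, by omega⟩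
  -- the first column of `M` is unimodular because `M` is invertible
  have hu : ∑ i, M.adjugate 0 i * M i 0 = 1 := by
    have := congrFun (congrFun (Matrix.adjugate_mul M) 0) 0
    simpa [Matrix.mul_apply, hdet] using this
  have hprime : ∀ p : R, Prime p → ¬ ∀ i, p ∣ M i 0 := by
    intro p hp h
    refine hp.not_isUnit (isUnit_of_dvd_one ?_)
    rw [← hu]
    exact Finset.dvd_sum fun i _ => (h i).mul_left _
  rw [← add_assoc]
  by_cases hz : ∀ i : Fin (n + 1), M i.succ.succ 0 = 0
  · refine ElemProd.left (i := (0 : Fin (n + 1)).succ.succ) (j := 0) (Fin.succ_ne_zero _) 1 ?_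
    refine reduce_of_unimodular _ (by
      rw [Matrix.det_mul, det_transvection_of_ne _ _ (Fin.succ_ne_zero _), hdet, one_mul])
      (Fin.cons (M.adjugate 0 1) (Fin.cons (M.adjugate 0 0) 0)) ?_ H
    rw [Fin.sum_univ_succ, Fin.sum_univ_succ] at hu
    simp only [hz, mul_zero, Finset.sum_const_zero, add_zero] at hu
    rw [Fin.sum_univ_succ, Fin.sum_univ_succ]
    simp only [Fin.cons_zero, Fin.cons_succ, Pi.zero_apply, zero_mul, Finset.sum_const_zero,
      add_zero]
    rw [Matrix.transvection_mul_apply_same, Matrix.transvection_mul_apply_of_ne, hz]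
    · rw [← Fin.succ_zero_eq_one]
      linear_combination hu
    · exact fun h => Fin.succ_ne_zero (0 : Fin (n + 1)) (Fin.succ_injective _ h).symm
  · push Not at hz
    obtain ⟨i₀, hi₀⟩ := hz
    set I := Ideal.span (Set.range fun i : Fin (n + 1) => M i.succ.succ 0) with hI
    set g := Submodule.IsPrincipal.generator I with hgdef
    have hgI : g ∈ I := Submodule.IsPrincipal.generator_mem I
    have hgd : ∀ i : Fin (n + 1), g ∣ M i.succ.succ 0 := fun i =>
      (Submodule.IsPrincipal.mem_iff_generator_dvd I).1 (Ideal.subset_span ⟨i, rfl⟩)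
    have hg0 : g ≠ 0 := fun h0 => hi₀ (by simpa [h0] using hgd i₀)
    obtain ⟨y, hy⟩ := (Ideal.mem_span_range_iff_exists_fun).1 hgI
    obtain ⟨t, u, w, ht⟩ := exists_isCoprime_add_mul (M 1 0) (M 0 0) g hg0 (by
      intro p hp h1 h2 h3
      refine hprime p hp fun i => ?_
      refine Fin.cases h2 (fun i => ?_) i
      refine Fin.cases h1 (fun i => ?_) i
      exact h3.trans (hgd i))
    refine ElemProd.left (i := (0 : Fin (n + 2)).succ) (j := 0) (Fin.succ_ne_zero _) t ?_
    refine reduce_of_unimodular _ (by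
      rw [Matrix.det_mul, det_transvection_of_ne _ _ (Fin.succ_ne_zero _), hdet, one_mul])
      (Fin.cons u fun i => w * y i) ?_ H
    rw [Fin.sum_univ_succ, Matrix.transvection_mul_apply_same]
    simp only [Fin.cons_zero, Fin.cons_succ]
    have hne : ∀ i : Fin (n + 1), i.succ.succ ≠ (0 : Fin (n + 2)).succ := fun i h =>
      Fin.succ_ne_zero i (Fin.succ_injective _ h)
    rw [Finset.sum_congr rfl fun i _ => by
      rw [Matrix.transvection_mul_apply_of_ne _ _ _ _ (hne i)]]
    simp only [mul_assoc, ← Finset.mul_sum]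
    rw [hy, ← ht, Fin.succ_zero_eq_one]

end Reduction

end ElemProd

/-! ### Powers of a matrix in `SL₂` inside `SL₃` -/

section Swindle

open Matrix

variable {R : Type*} [CommRing R]

/-- By Cayley--Hamilton every power of `A ∈ SL₂` has the form `f + g A`; its corner is the power of
the corner of `A`, modulo the upper right entry. -/
lemma exists_pow_eq (a b c d : R) (hdet : a * d - b * c = 1) (k : ℕ) :
    ∃ f g : R, !![a, b; c, d] ^ k = !![f + g * a, g * b; g * c, f + g * d] ∧
      b ∣ f + g * a - a ^ k := by
  induction k with
  | zero => exact ⟨1, 0, by simp [Matrix.one_fin_two], by simp⟩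
  | succ k ih =>
    obtain ⟨f, g, h1, h2⟩ := ih
    refine ⟨-g, f + g * (a + d), ?_, ?_⟩
    · rw [pow_succ, h1, Matrix.mul_fin_two]
      congr! 2
      · congr! 1
        · linear_combination -g * hdet
        · congr! 1
          ring
      · congr! 1
        · congr! 1
          · ring
          · congr! 1
            linear_combination -g * hdet
    · obtain ⟨e, he⟩ := h2
      refine ⟨e * a + g * c, ?_⟩
      rw [pow_succ]
      linear_combination a * he + g * hdet

/-- The sign vector `(-1, -1, 1)`. -/
def signVec (R : Type*) [CommRing R] : Fin 3 → R := ![-1, -1, 1]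

lemma signVec_mul_self (i : Fin 3) : signVec R i * signVec R i = 1 := by
  fin_cases i <;> simp [signVec]

/-- Evaluate a product of a transvection and an explicit `3 × 3` matrix. -/
lemma transvection_mul_fin_three (i j : Fin 3) (r : R) (M N : Matrix (Fin 3) (Fin 3) R)
    (h : ∀ a b, N a b = M a b + if a = i then r * M j b else 0) : transvection i j r * M = N := by
  ext a b
  rw [h]
  by_cases hai : a = i
  · subst hai; simp
  · simp [hai]

lemma mul_transvection_fin_three (i j : Fin 3) (r : R) (M N : Matrix (Fin 3) (Fin 3) R)
    (h : ∀ a b, N a b = M a b + if b = j then r * M a i else 0) : M * transvection i j r = N := by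
  ext a b
  rw [h]
  by_cases hbj : b = j
  · subst hbj; simp
  · simp [hbj]

lemma ElemProd.dleft' {D : Fin 3 → R} (hD : ∀ i, D i * D i = 1) {k : ℕ}
    {M : Matrix (Fin 3) (Fin 3) R} (N : Matrix (Fin 3) (Fin 3) R) (i j : Fin 3) (r : R)
    (hij : i ≠ j) (h : ElemProd k (diagonal D * N))
    (hN : ∀ a b, N a b = M a b + if a = i then r * M j b else 0) :
    ElemProd (k + 1) (diagonal D * M) :=
  ElemProd.dleft hD hij r (by rwa [transvection_mul_fin_three i j r M N hN])

lemma ElemProd.dright' {D : Fin 3 → R} {k : ℕ}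
    {M : Matrix (Fin 3) (Fin 3) R} (N : Matrix (Fin 3) (Fin 3) R) (i j : Fin 3) (r : R)
    (hij : i ≠ j) (h : ElemProd k (diagonal D * N))
    (hN : ∀ a b, N a b = M a b + if b = j then r * M a i else 0) :
    ElemProd (k + 1) (diagonal D * M) :=
  ElemProd.dright hij r (by rwa [mul_transvection_fin_three i j r M N hN])

lemma forall_fin_three {P : Fin 3 → Fin 3 → Prop} (h00 : P 0 0) (h01 : P 0 1) (h02 : P 0 2)
    (h10 : P 1 0) (h11 : P 1 1) (h12 : P 1 2) (h20 : P 2 0) (h21 : P 2 1) (h22 : P 2 2) :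
    ∀ a b, P a b := by
  intro a b
  fin_cases a <;> fin_cases b <;> assumption

/-- Two swindles.  Suppose `α ≡ 1` modulo `s`, `α ≡ -1` modulo `t` and `α ≡ 1` modulo `b`.  The
first six operations transfer the factor `s` from the entry `s t b` to the opposite entry, using the
auxiliary coordinate `0`; the next six do the same with `t`, using the coordinate `1` that the first
swindle has freed; three more reduce the resulting matrix to a diagonal sign matrix. -/
lemma swindle (s t b C α δ x x' y : R) (hx : α = 1 + s * x) (hx' : α = -1 + t * x')
    (hy : α = 1 + y * b) (hdet : α * δ - s * (t * b) * C = 1) :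
    ElemProd 15 (diagonal (signVec R) * !![1, 0, 0; 0, α, s * (t * b); 0, C, δ]) := by
  have hD := signVec_mul_self (R := R)
  have h01 : (0 : Fin 3) ≠ 1 := by decide
  have h02 : (0 : Fin 3) ≠ 2 := by decide
  have h12 : (1 : Fin 3) ≠ 2 := by decide
  refine ElemProd.dleft' hD !![1, 0, 0; s, α, s * (t * b); 0, C, δ] 1 0 s h01.symm ?_
    (by apply forall_fin_three <;> simp)
  refine ElemProd.dright' !![1, 0, -(t * b); s, α, 0; 0, C, δ] 0 2 (-(t * b)) h02 ?_
    (by apply forall_fin_three <;> simp; ring)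
  refine ElemProd.dright' !![1, -x, -(t * b); s, 1, 0; 0, C, δ] 0 1 (-x) h01 ?_
    (by apply forall_fin_three <;> simp [hx]; ring)
  refine ElemProd.dright' !![α, -x, -(t * b); 0, 1, 0; -(s * C), C, δ] 1 0 (-s) h01.symm ?_
    (by apply forall_fin_three <;> simp [hx])
  refine ElemProd.dleft' hD !![α, 0, -(t * b); 0, 1, 0; -(s * C), C, δ] 0 1 x h01 ?_
    (by apply forall_fin_three <;> simp)
  refine ElemProd.dleft' hD !![α, 0, -(t * b); 0, 1, 0; -(s * C), 0, δ] 2 1 (-C) h12.symm ?_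
    (by apply forall_fin_three <;> simp)
  refine ElemProd.dleft' hD !![α, t, -(t * b); 0, 1, 0; -(s * C), 0, δ] 0 1 t h01 ?_
    (by apply forall_fin_three <;> simp)
  refine ElemProd.dright' !![α, t, 0; 0, 1, b; -(s * C), 0, δ] 1 2 b h12 ?_
    (by apply forall_fin_three <;> simp; ring)
  refine ElemProd.dright' !![-1, t, 0; -x', 1, b; -(s * C), 0, δ] 1 0 (-x') h01.symm ?_
    (by apply forall_fin_three <;> simp [hx']; ring)
  refine ElemProd.dright' !![-1, 0, 0; -x', -α, b; -(s * C), -(t * (s * C)), δ] 0 1 t h01 ?_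
    (by apply forall_fin_three <;> simp [hx']; ring)
  refine ElemProd.dleft' hD !![-1, 0, 0; 0, -α, b; -(s * C), -(t * (s * C)), δ] 1 0 (-x')
    h01.symm ?_ (by apply forall_fin_three <;> simp)
  refine ElemProd.dleft' hD !![-1, 0, 0; 0, -α, b; 0, -(t * (s * C)), δ] 2 0 (-(s * C))
    h02.symm ?_ (by apply forall_fin_three <;> simp)
  refine ElemProd.dright' !![-1, 0, 0; 0, -1, b; 0, -(t * (s * C)) + y * δ, δ] 2 1 y h12.symm ?_
    (by apply forall_fin_three <;> simp [hy])
  refine ElemProd.dleft' hD !![-1, 0, 0; 0, -1, b; 0, 0, 1] 2 1 (-(t * (s * C)) + y * δ)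
    h12.symm ?_ (by
      apply forall_fin_three <;> simp
      linear_combination -hdet + δ * hy)
  refine ElemProd.dright' (diagonal (signVec R)) 1 2 b h12 ?_
    (by apply forall_fin_three <;> simp [signVec])
  have : diagonal (signVec R) * diagonal (signVec R) = 1 := by simp [hD]
  rw [this]
  exact ElemProd.one 0

/-- If `a ^ k ≡ 1` modulo `b`, then the `k`-th power of the matrix with first row `(a, b)` is, up to
a fixed diagonal sign matrix, a product of 15 transvections in `SL₃`.  The decomposition monoid
property splits `g ∣ (1 - f) (1 + f)`, a consequence of `det (f + g A) = 1`, into the two factors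
to which the swindles apply. -/
lemma elemProd_pow [DecompositionMonoid R] (a b c d : R) (hdet : a * d - b * c = 1) (k : ℕ)
    (hk : b ∣ a ^ k - 1) :
    ElemProd 15 (diagonal (signVec R) * oneSum (!![a, b; c, d] ^ k)) := by
  obtain ⟨f, g, h1, h2⟩ := exists_pow_eq a b c d hdet k
  have hd : (f + g * a) * (f + g * d) - g * b * (g * c) = 1 := by
    have := congrArg Matrix.det h1
    rw [Matrix.det_pow, Matrix.det_fin_two_of, Matrix.det_fin_two_of, hdet, one_pow] at this
    exact this.symm
  have hg : g ∣ (f - 1) * (f + 1) :=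
    ⟨-(g + f * (a + d)), by linear_combination hd - g ^ 2 * hdet⟩
  obtain ⟨s, t, ⟨x, hx⟩, ⟨x', hx'⟩, rfl⟩ := exists_dvd_and_dvd_of_dvd_mul hg
  obtain ⟨y, hy⟩ : b ∣ f + s * t * a - 1 := by
    have := dvd_add h2 hk
    rwa [sub_add_sub_cancel] at this
  have := swindle s t b (s * t * c) (f + s * t * a) (f + s * t * d) (x + t * a) (x' + s * a) y
    (by linear_combination hx) (by linear_combination hx') (by linear_combination hy)
    (by linear_combination hd)
  convert this using 2
  rw [h1]
  ext i j
  revert i j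
  apply forall_fin_three <;> first | rfl | exact mul_assoc _ _ _

lemma oneSum_fin_two (a b c d : R) :
    oneSum !![a, b; c, d] = !![1, 0, 0; 0, a, b; 0, c, d] := by
  ext i j
  revert i j
  apply forall_fin_three <;> rfl

lemma oneSum_transpose {n : ℕ} (B : Matrix (Fin n) (Fin n) R) :
    oneSum Bᵀ = (oneSum B)ᵀ := by
  ext i j
  refine Fin.cases ?_ (fun i => ?_) i <;> refine Fin.cases ?_ (fun j => ?_) j <;> simp

/-- If suitable consecutive powers of `a` are congruent to `1` modulo the two off-diagonal entries,
then `A = A ^ (l + 1) (A ^ l)⁻¹` is a product of 30 transvections: the two sign matrices cancel. -/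
lemma elemProd_thirty [DecompositionMonoid R] (a b c d : R) (hdet : a * d - b * c = 1) (l : ℕ)
    (hb : b ∣ a ^ (l + 1) - 1) (hc : c ∣ a ^ l - 1) :
    ElemProd 30 (oneSum !![a, b; c, d]) := by
  set A := !![a, b; c, d] with hA
  set D := diagonal (signVec R) with hD
  have hDD : D * D = 1 := by simp [hD, signVec_mul_self]
  have h1 := elemProd_pow a b c d hdet (l + 1) hb
  have h2 := elemProd_pow a c b d (by linear_combination hdet) l hc
  have hAT : !![a, c; b, d] = Aᵀ := by
    ext i j
    fin_cases i <;> fin_cases j <;> rfl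
  rw [hAT, ← Matrix.transpose_pow, oneSum_transpose] at h2
  replace h2 := (h2.transpose.conj (D := signVec R) signVec_mul_self)
  rw [Matrix.transpose_mul, Matrix.transpose_transpose, Matrix.diagonal_transpose, ← hD,
    Matrix.mul_assoc, Matrix.mul_assoc, hDD, Matrix.mul_one] at h2
  obtain ⟨N, hN, hN1, -⟩ := h2.exists_inv
  have key : N * (D * oneSum (A ^ (l + 1))) = oneSum A := by
    rw [pow_succ, oneSum_mul, ← Matrix.mul_assoc D, ← Matrix.mul_assoc N, hN1, Matrix.one_mul]
  rw [← key]
  exact hN.mul h1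

end Swindle

/-! ### Polynomials whose logarithmic derivative has bounded coefficients -/

section LogDerivative

open Polynomial Filter Topology

/-- The series `∑_{n ≥ 1} X ^ n` in terms of which `X ζ' = ζ σ` for `ζ = 1 / (1 - X)`. -/
lemma mk_one_sub_X : (PowerSeries.mk fun _ => (1 : ℂ)) * (1 - PowerSeries.X) = 1 :=
  PowerSeries.mk_one_mul_one_sub_eq_one ℂ

/-- Evaluation of an identity `L T = H` at a point of the open unit disc. -/
lemma eval_mul_tsum (L H : ℂ[X]) (T : ℕ → ℂ) (B : ℝ) (hT : ∀ n, ‖T n‖ ≤ B)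
    (h : (L : PowerSeries ℂ) * PowerSeries.mk T = H) (u : ℂ) (hu : ‖u‖ < 1) :
    L.eval u * ∑' n, T n * u ^ n = H.eval u := by
  have hpoly : ∀ G : ℂ[X], HasSum (fun n => G.coeff n * u ^ n) (G.eval u) := fun G => by
    rw [eval_eq_sum_range]
    refine hasSum_sum_of_ne_finset_zero fun n hn => ?_
    rw [coeff_eq_zero_of_natDegree_lt (by simpa using hn), zero_mul]
  have hpolyn : Summable fun n => ‖L.coeff n * u ^ n‖ :=
    summable_of_ne_finset_zero (s := Finset.range (L.natDegree + 1)) fun n hn => by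
      rw [coeff_eq_zero_of_natDegree_lt (by simpa using hn), zero_mul, norm_zero]
  have hTn : Summable fun n => ‖T n * u ^ n‖ := by
    refine Summable.of_nonneg_of_le (fun _ => norm_nonneg _) (fun n => ?_)
      ((summable_geometric_of_lt_one (norm_nonneg u) hu).mul_left B)
    rw [norm_mul, norm_pow]
    exact mul_le_mul_of_nonneg_right (hT n) (by positivity)
  rw [← (hpoly L).tsum_eq, tsum_mul_tsum_eq_tsum_sum_antidiagonal_of_summable_norm hpolyn hTn,
    ← (hpoly H).tsum_eq]
  refine tsum_congr fun n => ?_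
  have := congrArg (PowerSeries.coeff n) h
  rw [PowerSeries.coeff_mul, coeff_coe] at this
  rw [← this, Finset.sum_mul]
  refine Finset.sum_congr rfl fun p hp => ?_
  rw [Finset.HasAntidiagonal.mem_antidiagonal] at hp
  rw [coeff_coe, PowerSeries.coeff_mk, ← hp, pow_add]
  ring

/-- A polynomial whose logarithmic derivative has bounded coefficients has no zero in the open
unit disc: at a zero the logarithmic derivative would have a pole. -/
lemma eval_ne_zero_of_norm_lt_one (L : ℂ[X]) (S : ℕ → ℂ) (h0 : L.coeff 0 = 1)
    (hS : ∀ n, ‖S n‖ ≤ 1)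
    (h : (L : PowerSeries ℂ) * PowerSeries.mk S = (X * derivative L : ℂ[X])) (u : ℂ)
    (hu : ‖u‖ < 1) : L.eval u ≠ 0 := by
  intro hroot
  have hL : L ≠ 0 := by rintro rfl; simp at h0
  have hu0 : u ≠ 0 := by
    rintro rfl
    rw [← coeff_zero_eq_eval_zero, h0] at hroot
    exact one_ne_zero hroot
  obtain ⟨G, hG, hGu⟩ := exists_eq_pow_rootMultiplicity_mul_and_not_dvd L hL u
  have hk := (rootMultiplicity_pos hL).2 hroot
  obtain ⟨k, hk⟩ : ∃ k, L.rootMultiplicity u = k + 1 := ⟨_, (Nat.succ_pred_eq_of_pos hk).symm⟩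
  rw [hk] at hG
  -- cancel `(X - u) ^ k`
  have h1 : ((((X - C u) * G : ℂ[X]) : PowerSeries ℂ)) * PowerSeries.mk S
      = (X * (C ((k : ℂ) + 1) * G + (X - C u) * derivative G) : ℂ[X]) := by
    have hne : (((X - C u) ^ k : ℂ[X]) : PowerSeries ℂ) ≠ 0 := by
      rw [Ne, Polynomial.coe_eq_zero_iff]
      exact pow_ne_zero _ (X_sub_C_ne_zero u)
    refine mul_left_cancel₀ hne ?_
    rw [← mul_assoc, ← coe_mul, ← coe_mul, ← mul_assoc, ← pow_succ, ← hG, h, hG]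
    congr 1
    rw [derivative_mul, derivative_X_sub_C_pow]
    push_cast
    ring
  have h2 := eval_mul_tsum _ _ S 1 hS h1 u hu
  simp only [eval_mul, eval_sub, eval_X, eval_C, sub_self, zero_mul, eval_add, add_zero] at h2
  rw [dvd_iff_isRoot, IsRoot] at hGu
  have hk1 : (k : ℂ) + 1 ≠ 0 := by exact_mod_cast k.succ_ne_zero
  exact mul_ne_zero hu0 (mul_ne_zero hk1 hGu) h2.symm

/-- The coefficients of the logarithmic derivative of a product of linear factors are the negated
power sums of the inverse roots. -/
lemma prod_mul_mk (s : Multiset ℂ) (hs : ∀ u ∈ s, u ≠ 0) :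
    (((s.map fun u => X - C u).prod : ℂ[X]) : PowerSeries ℂ) *
      PowerSeries.mk (fun n => if n = 0 then 0 else -(s.map fun u => (u⁻¹) ^ n).sum)
      = (X * derivative (s.map fun u => X - C u).prod : ℂ[X]) := by
  induction s using Multiset.induction_on with
  | empty =>
    simp only [Multiset.map_zero, Multiset.prod_zero, Multiset.sum_zero, neg_zero, ite_self,
      derivative_one, mul_zero, coe_zero]
    ext n
    simp
  | cons a s ih =>
    have ih := ih fun u hu => hs u (Multiset.mem_cons_of_mem hu)
    have ha : a ≠ 0 := hs a (Multiset.mem_cons_self a s)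
    have hT : PowerSeries.mk (fun n => if n = 0 then 0 else
        -((a ::ₘ s).map fun u => (u⁻¹) ^ n).sum)
        = PowerSeries.mk (fun n => if n = 0 then 0 else -(a⁻¹) ^ n) +
          PowerSeries.mk (fun n => if n = 0 then 0 else -(s.map fun u => (u⁻¹) ^ n).sum) := by
      ext n
      by_cases hn : n = 0
      · simp [hn]
      · simp [hn, add_comm]
    have h1 : ((X - C a : ℂ[X]) : PowerSeries ℂ) *
        PowerSeries.mk (fun n => if n = 0 then 0 else -(a⁻¹) ^ n) = (X : ℂ[X]) := by
      rw [coe_sub, coe_X, coe_C, sub_mul]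
      ext n
      rcases n with _ | _ | n
      · simp
      · simp [PowerSeries.coeff_succ_X_mul, ha]
      · simp [PowerSeries.coeff_succ_X_mul, PowerSeries.coeff_X, pow_succ, ha]
    rw [hT, Multiset.map_cons, Multiset.prod_cons, derivative_mul, derivative_X_sub_C, one_mul,
      coe_mul, mul_add, mul_right_comm, h1, mul_assoc, ih, ← coe_mul, ← coe_mul, ← coe_add]
    congr 1
    ring

/-- If all roots lie outside the closed unit disc, the power sums of the inverse roots tend to
zero. -/
lemma tendsto_of_roots (L : ℂ[X]) (S : ℕ → ℂ) (h0 : L.coeff 0 = 1)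
    (h : (L : PowerSeries ℂ) * PowerSeries.mk S = (X * derivative L : ℂ[X]))
    (hL : ∀ u, ‖u‖ ≤ 1 → L.eval u ≠ 0) : Tendsto S atTop (𝓝 0) := by
  have hL0 : L ≠ 0 := by rintro rfl; simp at h0
  have hroots : ∀ u ∈ L.roots, 1 < ‖u‖ := fun u hu => by
    by_contra! hcon
    exact hL u hcon ((mem_roots hL0).1 hu)
  have hprod := (IsAlgClosed.splits L).eq_prod_roots
  have h1 := prod_mul_mk L.roots fun u hu h => by
    have := hroots u hu
    rw [h, norm_zero] at this
    linarith
  have h2 : (L : PowerSeries ℂ) *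
      PowerSeries.mk (fun n => if n = 0 then 0 else -(L.roots.map fun u => (u⁻¹) ^ n).sum)
      = (X * derivative L : ℂ[X]) := by
    generalize PowerSeries.mk (fun n => if n = 0 then 0 else
      -(L.roots.map fun u => (u⁻¹) ^ n).sum) = A at h1
    rw [hprod, coe_mul, mul_assoc, h1, derivative_C_mul, ← coe_mul]
    congr 1
    ring
  rw [← h] at h2
  have h3 := mul_left_cancel₀ (by rwa [Ne, Polynomial.coe_eq_zero_iff]) h2
  have h4 : ∀ n, S n = if n = 0 then 0 else -(L.roots.map fun u => (u⁻¹) ^ n).sum := fun n => by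
    have := congrArg (PowerSeries.coeff n) h3
    simpa using this.symm
  have h5 : Tendsto (fun n : ℕ => (L.roots.map fun u => (u⁻¹) ^ n).sum) atTop (𝓝 0) := by
    have : ∀ s : Multiset ℂ, (∀ u ∈ s, 1 < ‖u‖) →
        Tendsto (fun n : ℕ => (s.map fun u => (u⁻¹) ^ n).sum) atTop (𝓝 0) := by
      intro s
      induction s using Multiset.induction_on with
      | empty => simp
      | cons a s ih =>
        intro hs
        simp only [Multiset.map_cons, Multiset.sum_cons]
        rw [← add_zero (0 : ℂ)]
        refine Tendsto.add (tendsto_pow_atTop_nhds_zero_of_norm_lt_one ?_)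
          (ih fun u hu => hs u (Multiset.mem_cons_of_mem hu))
        rw [norm_inv]
        exact inv_lt_one_of_one_lt₀ (hs a (Multiset.mem_cons_self a s))
    exact this _ hroots
  have h6 := h5.neg
  rw [neg_zero] at h6
  refine h6.congr' ?_
  filter_upwards [eventually_gt_atTop 0] with n hn
  rw [h4, if_neg hn.ne']

/-- The relation `L S = X L'` between power series, read off coefficientwise. -/
lemma logDeriv_iff (L : ℂ[X]) (S : ℕ → ℂ) :
    (L : PowerSeries ℂ) * PowerSeries.mk S = (X * derivative L : ℂ[X]) ↔
      ∀ n : ℕ, (n : ℂ) * L.coeff n =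
        ∑ p ∈ Finset.HasAntidiagonal.antidiagonal n, L.coeff p.1 * S p.2 := by
  have h1 : ∀ n : ℕ, (X * derivative L).coeff n = (n : ℂ) * L.coeff n := by
    rintro (_ | n)
    · simp
    · rw [coeff_X_mul, coeff_derivative]
      push_cast
      ring
  rw [PowerSeries.ext_iff]
  refine forall_congr' fun n => ?_
  rw [PowerSeries.coeff_mul, coeff_coe, h1]
  simp only [coeff_coe, PowerSeries.coeff_mk]
  exact eq_comm

open scoped ComplexOrder in
/-- If the coefficients of the logarithmic derivative of the polynomial `R` are nonnegative, they
are eventually zero: a cancellation-free version of the fact that a power series with nonnegative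
coefficients is singular on the positive real axis. -/
lemma logDeriv_eventually_zero (R : ℂ[X]) (s : ℕ → ℂ) (h0 : R.coeff 0 = 1) (hs : ∀ n, 0 ≤ s n)
    (h : (R : PowerSeries ℂ) * PowerSeries.mk s = (X * derivative R : ℂ[X])) :
    ∀ n, R.natDegree < n → s n = 0 := by
  have hs0 : s 0 = 0 := by
    have := congrArg (PowerSeries.coeff 0) h
    simpa [PowerSeries.coeff_mul, h0] using this
  have hrec := (logDeriv_iff R s).1 h
  have hnonneg : ∀ n, 0 ≤ R.coeff n := by
    intro n
    induction n using Nat.strong_induction_on with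
    | _ n ih =>
      rcases Nat.eq_zero_or_pos n with rfl | hn
      · rw [h0]; exact zero_le_one
      · have h1 : 0 ≤ (n : ℂ) * R.coeff n := by
          rw [hrec]
          refine Finset.sum_nonneg fun p hp => ?_
          rw [Finset.HasAntidiagonal.mem_antidiagonal] at hp
          rcases Nat.eq_zero_or_pos p.2 with h2 | h2
          · rw [h2, hs0, mul_zero]
          · exact mul_nonneg (ih _ (by omega)) (hs _)
        have h2 : (0 : ℂ) ≤ (n : ℂ)⁻¹ := by
          rw [← Complex.ofReal_natCast, ← Complex.ofReal_inv, Complex.zero_le_real]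
          positivity
        have h3 := mul_nonneg h2 h1
        rwa [inv_mul_cancel_left₀ (by exact_mod_cast hn.ne')] at h3
  intro n hn
  have h1 := hrec n
  rw [coeff_eq_zero_of_natDegree_lt hn, mul_zero] at h1
  have h2 := (Finset.sum_eq_zero_iff_of_nonneg fun p _ => mul_nonneg (hnonneg p.1) (hs p.2)).1
    h1.symm (0, n) (by simp)
  simpa [h0] using h2

lemma mul_logDeriv (P Q : ℂ[X]) (A B : PowerSeries ℂ)
    (hA : (P : PowerSeries ℂ) * A = (X * derivative P : ℂ[X]))
    (hB : (Q : PowerSeries ℂ) * B = (X * derivative Q : ℂ[X])) :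
    ((P * Q : ℂ[X]) : PowerSeries ℂ) * (A + B) = (X * derivative (P * Q) : ℂ[X]) := by
  rw [derivative_mul, mul_add X, ← mul_assoc X, mul_left_comm X P, coe_add, coe_mul, coe_mul,
    coe_mul P, ← hA, ← hB]
  ring

lemma logDeriv_of_one_sub_X_mul (K : ℂ[X]) (A : PowerSeries ℂ)
    (h : (((1 - X) * K : ℂ[X]) : PowerSeries ℂ) * A = (X * derivative ((1 - X) * K) : ℂ[X])) :
    (K : PowerSeries ℂ) * (A + (PowerSeries.X * PowerSeries.mk fun _ => 1 : PowerSeries ℂ))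
      = (X * derivative K : ℂ[X]) := by
  have hne : (1 - PowerSeries.X : PowerSeries ℂ) ≠ 0 := fun h0 => by
    have := mk_one_sub_X
    rw [h0, mul_zero] at this
    exact zero_ne_one this
  refine mul_left_cancel₀ hne ?_
  have h1 := mk_one_sub_X
  rw [derivative_mul] at h
  push_cast at h ⊢
  simp only [derivative_sub, derivative_one, derivative_X, coe_sub, coe_zero, coe_one] at h
  linear_combination h + (K : PowerSeries ℂ) * PowerSeries.X * h1

open scoped ComplexOrder in
/-- The analogue of the nonvanishing of `L(1 + it, χ)`. If `L(w) = 0` with `|w| = 1`, then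
`|L(wX)|² / (1 - X)²` is a polynomial whose logarithmic derivative has the nonnegative
coefficients `2 + 2 Re (w ^ n S n)`. -/
lemma eventually_eq_neg_one (L : ℂ[X]) (S : ℕ → ℂ) (h0 : L.coeff 0 = 1) (hS0 : S 0 = 0)
    (hS : ∀ n, ‖S n‖ ≤ 1)
    (h : (L : PowerSeries ℂ) * PowerSeries.mk S = (X * derivative L : ℂ[X])) (w : ℂ)
    (hw : ‖w‖ = 1) (hroot : L.eval w = 0) : ∃ M, ∀ n, M < n → (w ^ n * S n).re = -1 := by
  rw [logDeriv_iff] at h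
  -- the polynomial `L(wX)` and its complex conjugate
  set P : ℂ[X] := L.comp (C w * X) with hP
  have hPc : ∀ n, P.coeff n = L.coeff n * w ^ n := fun n => comp_C_mul_X_coeff
  have hPS : (P : PowerSeries ℂ) * PowerSeries.mk (fun n => w ^ n * S n)
      = (X * derivative P : ℂ[X]) := by
    rw [logDeriv_iff]
    intro n
    rw [hPc, ← mul_assoc, h, Finset.sum_mul]
    refine Finset.sum_congr rfl fun p hp => ?_
    rw [Finset.HasAntidiagonal.mem_antidiagonal] at hp
    rw [hPc, ← hp, pow_add]
    ring
  obtain ⟨K, hK⟩ : ∃ K, P = (1 - X) * K := by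
    have h1 : P.IsRoot 1 := by simp [hP, IsRoot, eval_comp, hroot]
    obtain ⟨K, hK⟩ := dvd_iff_isRoot.2 h1
    exact ⟨-K, by rw [hK, C_1]; ring⟩
  have hQS : (P.map (starRingEnd ℂ) : PowerSeries ℂ) *
      PowerSeries.mk (fun n => starRingEnd ℂ (w ^ n * S n))
      = (X * derivative (P.map (starRingEnd ℂ)) : ℂ[X]) := by
    rw [logDeriv_iff] at hPS ⊢
    intro n
    have := congrArg (starRingEnd ℂ) (hPS n)
    simpa [coeff_map, map_sum] using this
  have hKc : P.map (starRingEnd ℂ) = (1 - X) * K.map (starRingEnd ℂ) := by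
    rw [hK]
    simp
  rw [hKc] at hQS
  rw [hK] at hPS
  have hR := mul_logDeriv _ _ _ _ (logDeriv_of_one_sub_X_mul _ _ hPS)
    (logDeriv_of_one_sub_X_mul _ _ hQS)
  have hmk : PowerSeries.mk (fun n => w ^ n * S n) + PowerSeries.X * PowerSeries.mk (fun _ => 1) +
      (PowerSeries.mk (fun n => starRingEnd ℂ (w ^ n * S n)) +
        PowerSeries.X * PowerSeries.mk fun _ => 1)
      = PowerSeries.mk (fun n => if n = 0 then 0 else
          ((2 + 2 * (w ^ n * S n).re : ℝ) : ℂ)) := by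
    ext n
    rcases n with _ | n
    · simp [hS0]
    · have := Complex.add_conj (w ^ (n + 1) * S (n + 1))
      simp only [map_add, PowerSeries.coeff_mk, PowerSeries.coeff_succ_X_mul, if_neg n.succ_ne_zero]
      push_cast at this ⊢
      linear_combination this
  rw [hmk] at hR
  have hK0 : K.coeff 0 = 1 := by
    have h1 := hPc 0
    rw [hK, mul_coeff_zero, h0] at h1
    simpa using h1
  have hre : ∀ n, -1 ≤ (w ^ n * S n).re := fun n => by
    have h1 := Complex.abs_re_le_norm (w ^ n * S n)
    rw [norm_mul, norm_pow, hw, one_pow, one_mul] at h1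
    linarith [neg_abs_le (w ^ n * S n).re, hS n]
  have hfin := logDeriv_eventually_zero _ _ (by simp [mul_coeff_zero, hK0]) (fun n => by
    split_ifs
    · exact le_rfl
    · rw [Complex.zero_le_real]
      linarith [hre n]) hR
  refine ⟨(K * K.map (starRingEnd ℂ)).natDegree, fun n hn => ?_⟩
  have h1 := hfin n hn
  rw [if_neg (by omega), Complex.ofReal_eq_zero] at h1
  linarith

/-- A polynomial whose logarithmic derivative has coefficients `S n` bounded by `1` has no zero in
the closed unit disc, unless `Re (w ^ n S n) = -1` for all large `n` and some `w` of modulus `1`.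
Without such zeros, `S n` tends to zero. -/
theorem tendsto_zero_of_logDeriv (L : ℂ[X]) (S : ℕ → ℂ) (h0 : L.coeff 0 = 1) (hS0 : S 0 = 0)
    (hS : ∀ n, ‖S n‖ ≤ 1)
    (h : (L : PowerSeries ℂ) * PowerSeries.mk S = (X * derivative L : ℂ[X]))
    (hw : ∀ w : ℂ, ‖w‖ = 1 → ∀ M, ∃ n, M < n ∧ (w ^ n * S n).re ≠ -1) :
    Tendsto S atTop (𝓝 0) := by
  refine tendsto_of_roots L S h0 h fun u hu hroot => ?_
  rcases hu.lt_or_eq with hu | hu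
  · exact eval_ne_zero_of_norm_lt_one L S h0 hS h u hu hroot
  · obtain ⟨M, hM⟩ := eventually_eq_neg_one L S h0 hS0 hS h u hu hroot
    obtain ⟨n, hn, hne⟩ := hw u hu M
    exact hne (hM n hn)

end LogDerivative

/-! ### Sums over monic polynomials over a finite field -/

section Counting

open Polynomial

variable {F : Type*} [Field F] [Finite F]

lemma finite_monic_natDegree_eq (n : ℕ) : {f : F[X] | f.Monic ∧ f.natDegree = n}.Finite := by
  have : Finite (degreeLT F n) := Finite.of_equiv _ (degreeLTEquiv F n).toEquiv.symm
  exact Finite.of_equiv _ (monicEquivDegreeLT (R := F) n).symm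

/-- The monic polynomials of degree `n`. -/
noncomputable def monics (F : Type*) [Field F] [Finite F] (n : ℕ) : Finset F[X] :=
  (finite_monic_natDegree_eq n).toFinset

@[simp] lemma mem_monics {n : ℕ} {f : F[X]} : f ∈ monics F n ↔ f.Monic ∧ f.natDegree = n := by
  simp [monics]

lemma card_monics (n : ℕ) : (monics F n).card = Nat.card F ^ n := by
  rw [monics, ← Nat.card_eq_card_finite_toFinset]
  have e : {f : F[X] | f.Monic ∧ f.natDegree = n} ≃ (Fin n → F) :=
    (monicEquivDegreeLT (R := F) n).trans (degreeLTEquiv F n).toEquiv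
  rw [Nat.card_congr e, Nat.card_fun, Nat.card_fin]

lemma finite_primePowers (n : ℕ) : {p : F[X] × ℕ | p.1.Monic ∧ Irreducible p.1 ∧ 0 < p.2 ∧
    p.1.natDegree * p.2 = n}.Finite := by
  have h := Set.Finite.prod (Set.Finite.biUnion (Set.finite_Iic n)
    fun d _ => finite_monic_natDegree_eq (F := F) d) (Set.finite_Iic n)
  refine h.subset ?_
  rintro ⟨P, j⟩ ⟨h1, h2, h3, h4⟩
  simp only at h1 h2 h3 h4
  have h5 := h2.natDegree_pos
  refine ⟨Set.mem_biUnion (x := P.natDegree) ?_ ⟨h1, rfl⟩, ?_⟩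
  · rw [Set.mem_Iic]
    nlinarith
  · rw [Set.mem_Iic]
    nlinarith

/-- The pairs `(P, j)` with `P` a monic irreducible polynomial and `j > 0`, representing the prime
powers `P ^ j` of degree `n`. -/
noncomputable def primePowers (F : Type*) [Field F] [Finite F] (n : ℕ) : Finset (F[X] × ℕ) :=
  (finite_primePowers n).toFinset

@[simp] lemma mem_primePowers {n : ℕ} {p : F[X] × ℕ} : p ∈ primePowers F n ↔
    p.1.Monic ∧ Irreducible p.1 ∧ 0 < p.2 ∧ p.1.natDegree * p.2 = n := by
  simp [primePowers]

lemma primePowers_zero : primePowers F 0 = ∅ := by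
  ext p
  rw [mem_primePowers]
  simp only [Finset.notMem_empty, iff_false]
  rintro ⟨-, h2, h3, h4⟩
  exact (Nat.mul_pos h2.natDegree_pos h3).ne' h4

open scoped Classical in
/-- The degree of a monic polynomial is the sum of the degrees of `P` over all its prime power
divisors `P ^ j`. -/
lemma natDegree_eq_sum (n : ℕ) (f : F[X]) (hf : f ∈ monics F n) :
    ∑ k ∈ Finset.range (n + 1), ∑ p ∈ primePowers F k,
      (if p.1 ^ p.2 ∣ f then p.1.natDegree else 0) = n := by
  rw [mem_monics] at hf
  obtain ⟨hf, hn⟩ := hf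
  set N := UniqueFactorizationMonoid.normalizedFactors f with hN
  have hmem : ∀ P, P ∈ N.toFinset ↔ P.Monic ∧ Irreducible P ∧ P ∣ f := by
    intro P
    rw [Multiset.mem_toFinset, hN, Polynomial.mem_normalizedFactors_iff hf.ne_zero]
    tauto
  have hcount : ∀ P ∈ N.toFinset, ∀ j, P ^ j ∣ f ↔ j ≤ N.count P := by
    intro P hP j
    obtain ⟨h1, h2, -⟩ := (hmem P).1 hP
    rw [pow_dvd_iff_le_emultiplicity,
      UniqueFactorizationMonoid.emultiplicity_eq_count_normalizedFactors h2 hf.ne_zero,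
      h1.normalize_eq_self, Nat.cast_le]
  have hle : ∀ {P : F[X]} {j : ℕ}, P ^ j ∣ f → P.natDegree * j ≤ n := by
    intro P j h
    have := natDegree_le_of_dvd h hf.ne_zero
    rw [natDegree_pow, hn] at this
    linarith
  set E := (N.toFinset ×ˢ Finset.Icc 1 n).filter fun p => p.1 ^ p.2 ∣ f with hE
  have h1 : ∀ k ∈ Finset.range (n + 1), ∑ p ∈ primePowers F k,
      (if p.1 ^ p.2 ∣ f then p.1.natDegree else 0)
      = ∑ p ∈ E with p.1.natDegree * p.2 = k, p.1.natDegree := by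
    intro k hk
    rw [← Finset.sum_filter]
    refine Finset.sum_congr ?_ fun _ _ => rfl
    ext ⟨P, j⟩
    simp only [Finset.mem_filter, mem_primePowers, hE, Finset.mem_product, hmem, Finset.mem_Icc]
    constructor
    · rintro ⟨⟨h1, h2, h3, h4⟩, h5⟩
      have := hle h5
      have := h2.natDegree_pos
      exact ⟨⟨⟨⟨h1, h2, (dvd_pow_self P h3.ne').trans h5⟩, h3, by nlinarith⟩, h5⟩, h4⟩
    · rintro ⟨⟨⟨⟨h1, h2, -⟩, h3, -⟩, h5⟩, h4⟩
      exact ⟨⟨h1, h2, h3, h4⟩, h5⟩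
  rw [Finset.sum_congr rfl h1, Finset.sum_fiberwise_of_maps_to (fun p hp => by
    rw [hE, Finset.mem_filter] at hp
    exact Finset.mem_range_succ_iff.2 (hle hp.2)), hE, Finset.sum_filter, Finset.sum_product]
  have h2 : ∀ P ∈ N.toFinset, ∑ j ∈ Finset.Icc 1 n, (if P ^ j ∣ f then P.natDegree else 0)
      = N.count P • P.natDegree := by
    intro P hP
    rw [← Finset.sum_filter, Finset.sum_const]
    congr 1
    have : (Finset.Icc 1 n).filter (fun j => P ^ j ∣ f) = Finset.Icc 1 (N.count P) := by
      ext j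
      simp only [Finset.mem_filter, Finset.mem_Icc]
      constructor
      · rintro ⟨⟨h1, -⟩, h2⟩
        exact ⟨h1, (hcount P hP j).1 h2⟩
      · rintro ⟨h1, h2⟩
        have h3 := (hcount P hP j).2 h2
        have := hle h3
        have := ((hmem P).1 hP).2.1.natDegree_pos
        exact ⟨⟨h1, by nlinarith⟩, h3⟩
    rw [this, Nat.card_Icc, Nat.add_sub_cancel]
  rw [Finset.sum_congr rfl h2, ← Finset.sum_multiset_map_count, ← hn]
  rw [← natDegree_multiset_prod_of_monic, UniqueFactorizationMonoid.prod_normalizedFactors_eq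
    hf.ne_zero, hf.normalize_eq_self]
  intro P hP
  exact ((hmem P).1 (Multiset.mem_toFinset.2 hP)).1

/-- The `n`-th coefficient of the `L`-function of `ψ`. -/
noncomputable def lCoeff (ψ : F[X] →* ℂ) (n : ℕ) : ℂ := ∑ f ∈ monics F n, ψ f

/-- The `n`-th coefficient of the logarithmic derivative of the `L`-function of `ψ`, that is, the
sum of the values of `ψ` over the prime powers of degree `n`, weighted by the von Mangoldt
function. -/
noncomputable def lambdaSum (ψ : F[X] →* ℂ) (n : ℕ) : ℂ :=
  ∑ p ∈ primePowers F n, (p.1.natDegree : ℂ) * ψ p.1 ^ p.2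

lemma lambdaSum_zero (ψ : F[X] →* ℂ) : lambdaSum ψ 0 = 0 := by
  rw [lambdaSum, primePowers_zero, Finset.sum_empty]

lemma lCoeff_zero (ψ : F[X] →* ℂ) : lCoeff ψ 0 = 1 := by
  have : monics F 0 = {1} := by
    ext f
    rw [mem_monics, Finset.mem_singleton]
    constructor
    · rintro ⟨h1, h2⟩
      exact (Monic.natDegree_eq_zero h1).1 h2
    · rintro rfl
      simp
  rw [lCoeff, this, Finset.sum_singleton, map_one]

open scoped Classical in
/-- The sum of `ψ` over the monic multiples of a monic polynomial. -/
lemma sum_filter_dvd (ψ : F[X] →* ℂ) (g : F[X]) (hg : g.Monic) (n : ℕ) (hn : g.natDegree ≤ n) :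
    ∑ f ∈ monics F n, (if g ∣ f then ψ f else 0) = ψ g * lCoeff ψ (n - g.natDegree) := by
  rw [← Finset.sum_filter, lCoeff, Finset.mul_sum]
  symm
  refine Finset.sum_bij (fun h _ => g * h) ?_ ?_ ?_ ?_
  · intro h hh
    rw [mem_monics] at hh
    rw [Finset.mem_filter, mem_monics]
    refine ⟨⟨hg.mul hh.1, ?_⟩, dvd_mul_right _ _⟩
    rw [hg.natDegree_mul hh.1, hh.2]
    omega
  · intro h _ h' _ heq
    exact mul_left_cancel₀ hg.ne_zero heq
  · intro f hf
    rw [Finset.mem_filter, mem_monics] at hf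
    obtain ⟨⟨hf, hfn⟩, h, rfl⟩ := hf
    have hh : h.Monic := hg.of_mul_monic_left hf
    rw [hg.natDegree_mul hh] at hfn
    exact ⟨h, by rw [mem_monics]; exact ⟨hh, by omega⟩, rfl⟩
  · intro h _
    rw [map_mul]

open scoped Classical in
/-- The Euler product in logarithmic form: Newton's identities between the coefficients of the
`L`-function and those of its logarithmic derivative. -/
lemma newton (ψ : F[X] →* ℂ) (n : ℕ) :
    (n : ℂ) * lCoeff ψ n = ∑ k ∈ Finset.range (n + 1), lambdaSum ψ k * lCoeff ψ (n - k) := by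
  have h1 : (n : ℂ) * lCoeff ψ n = ∑ f ∈ monics F n, ∑ k ∈ Finset.range (n + 1),
      ∑ p ∈ primePowers F k, (p.1.natDegree : ℂ) * (if p.1 ^ p.2 ∣ f then ψ f else 0) := by
    rw [lCoeff, Finset.mul_sum]
    refine Finset.sum_congr rfl fun f hf => ?_
    conv_lhs => rw [← natDegree_eq_sum n f hf]
    push_cast
    rw [Finset.sum_mul]
    refine Finset.sum_congr rfl fun k _ => ?_
    rw [Finset.sum_mul]
    refine Finset.sum_congr rfl fun p _ => ?_
    split_ifs <;> simp
  rw [h1, Finset.sum_comm]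
  refine Finset.sum_congr rfl fun k hk => ?_
  rw [Finset.sum_comm, lambdaSum, Finset.sum_mul]
  refine Finset.sum_congr rfl fun p hp => ?_
  rw [mem_primePowers] at hp
  have hdeg : (p.1 ^ p.2).natDegree = k := by
    rw [natDegree_pow, ← hp.2.2.2, mul_comm]
  rw [← Finset.mul_sum, sum_filter_dvd ψ _ (hp.1.pow _) n (by
    rw [hdeg]; exact Finset.mem_range_succ_iff.1 hk), hdeg, map_pow, mul_assoc]

/-- The weighted number of prime powers of degree `n` is `q ^ n`. -/
lemma lambdaSum_one (n : ℕ) (hn : 0 < n) : lambdaSum (1 : F[X] →* ℂ) n = (Nat.card F : ℂ) ^ n := by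
  have hc : ∀ k, lCoeff (1 : F[X] →* ℂ) k = (Nat.card F : ℂ) ^ k := fun k => by
    simp [lCoeff, card_monics]
  obtain ⟨m, rfl⟩ : ∃ m, n = m + 1 := ⟨n - 1, by omega⟩
  have h1 := newton (1 : F[X] →* ℂ) (m + 1)
  have h2 := newton (1 : F[X] →* ℂ) m
  rw [Finset.sum_range_succ] at h1
  simp only [hc] at h1 h2
  have h3 : ∑ k ∈ Finset.range (m + 1), lambdaSum (1 : F[X] →* ℂ) k * (Nat.card F : ℂ) ^ (m + 1 - k)
      = (Nat.card F : ℂ) *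
        ∑ k ∈ Finset.range (m + 1), lambdaSum (1 : F[X] →* ℂ) k * (Nat.card F : ℂ) ^ (m - k) := by
    rw [Finset.mul_sum]
    refine Finset.sum_congr rfl fun k hk => ?_
    rw [Nat.succ_sub (Finset.mem_range_succ_iff.1 hk), pow_succ]
    ring
  rw [h3, ← h2, Nat.sub_self] at h1
  push_cast at h1
  linear_combination -h1

lemma sum_natDegree_primePowers (n : ℕ) (hn : 0 < n) :
    ∑ p ∈ primePowers F n, (p.1.natDegree : ℝ) = (Nat.card F : ℝ) ^ n := by
  have := lambdaSum_one (F := F) n hn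
  simp only [lambdaSum, MonoidHom.one_apply, one_pow, mul_one] at this
  exact_mod_cast this

lemma norm_lambdaSum_le (ψ : F[X] →* ℂ) (hψ : ∀ f, ‖ψ f‖ ≤ 1) (n : ℕ) :
    ‖lambdaSum ψ n‖ ≤ (Nat.card F : ℝ) ^ n := by
  rcases Nat.eq_zero_or_pos n with rfl | hn
  · simp [lambdaSum_zero]
  · rw [← sum_natDegree_primePowers n hn]
    refine norm_sum_le_of_le _ fun p _ => ?_
    rw [norm_mul, norm_pow, Complex.norm_natCast]
    exact mul_le_of_le_one_right (Nat.cast_nonneg _) (pow_le_one₀ (norm_nonneg _) (hψ _))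

end Counting

/-! ### Primes in arithmetic progressions over a finite field -/

section Dirichlet

open Polynomial Filter Topology

lemma mulChar_norm_le_one {R : Type*} [CommRing R] [Finite R] (χ : MulChar R ℂ) (x : R) :
    ‖χ x‖ ≤ 1 := by
  by_cases hx : IsUnit x
  · obtain ⟨u, rfl⟩ := hx
    have h1 : χ u ^ Nat.card Rˣ = 1 := by
      rw [← map_pow, ← Units.val_pow_eq_pow_val, pow_card_eq_one', Units.val_one, map_one]
    exact (Complex.norm_eq_one_of_pow_eq_one h1 Nat.card_pos.ne').le
  · rw [χ.map_nonunit hx, norm_zero]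
    exact zero_le_one

variable {F : Type*} [Field F]

/-- The completely multiplicative function on polynomials attached to a character modulo `a`. -/
noncomputable def charHom {a : F[X]} (χ : MulChar (AdjoinRoot a) ℂ) : F[X] →* ℂ :=
  χ.toMonoidHom.comp (AdjoinRoot.mk a : F[X] →* AdjoinRoot a)

lemma charHom_apply {a : F[X]} (χ : MulChar (AdjoinRoot a) ℂ) (f : F[X]) :
    charHom χ f = χ (AdjoinRoot.mk a f) := rfl

variable [Finite F]

lemma finite_adjoinRoot (a : F[X]) (ha : a.Monic) : Finite (AdjoinRoot a) := by
  have : Module.Finite F (AdjoinRoot a) := ha.finite_adjoinRoot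
  exact Module.finite_of_finite F

/-- The `L`-function of a nontrivial character is a polynomial: in degrees `n ≥ deg a` the monic
polynomials are invariant under translation by all residues modulo `a`. -/
lemma lCoeff_charHom {a : F[X]} (ha : a.Monic) (χ : MulChar (AdjoinRoot a) ℂ) (hχ : χ ≠ 1) (n : ℕ)
    (hn : a.natDegree ≤ n) : lCoeff (charHom χ) n = 0 := by
  have := finite_adjoinRoot a ha
  have := Fintype.ofFinite (AdjoinRoot a)
  have hdeg : ∀ f g : F[X], f ∈ monics F n → f + g %ₘ a ∈ monics F n := by
    intro f g hf
    rw [mem_monics] at hf ⊢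
    have hlt : (g %ₘ a).degree < f.degree := by
      refine (degree_modByMonic_lt g ha).trans_le ?_
      rw [degree_eq_natDegree ha.ne_zero, degree_eq_natDegree hf.1.ne_zero, hf.2]
      exact_mod_cast hn
    exact ⟨hf.1.add_of_left hlt, by rw [natDegree_add_eq_left_of_degree_lt hlt, hf.2]⟩
  have hmk : ∀ g : F[X], AdjoinRoot.mk a (g %ₘ a) = AdjoinRoot.mk a g := by
    intro g
    rw [AdjoinRoot.mk_eq_mk]
    exact ⟨-(g /ₘ a), by linear_combination modByMonic_add_div g a⟩
  have h1 : ∀ r : AdjoinRoot a, lCoeff (charHom χ) n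
      = ∑ f ∈ monics F n, χ (AdjoinRoot.mk a f + r) := by
    intro r
    obtain ⟨g, rfl⟩ := AdjoinRoot.mk_surjective r
    rw [lCoeff]
    symm
    refine Finset.sum_bij' (fun f _ => f + g %ₘ a) (fun f _ => f + (-g) %ₘ a)
      (fun f hf => hdeg f g hf) (fun f hf => hdeg f (-g) hf) ?_ ?_ ?_
    · intro f _
      rw [neg_modByMonic]
      ring
    · intro f _
      rw [neg_modByMonic]
      ring
    · intro f _
      rw [charHom_apply, map_add (AdjoinRoot.mk a), hmk]
  have h2 : ∑ r : AdjoinRoot a, lCoeff (charHom χ) n = 0 := by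
    rw [Finset.sum_congr rfl fun r _ => h1 r, Finset.sum_comm]
    refine Finset.sum_eq_zero fun f _ => ?_
    rw [← MulChar.sum_eq_zero_of_ne_one hχ]
    exact Fintype.sum_equiv (Equiv.addLeft (AdjoinRoot.mk a f)) _ _ fun _ => rfl
  rw [Finset.sum_const, nsmul_eq_mul, mul_eq_zero] at h2
  refine h2.resolve_left ?_
  exact Nat.cast_ne_zero.2 (Finset.card_ne_zero.2 Finset.univ_nonempty)

/-- The sum over prime powers of degree `n` of a nontrivial character is `o(q ^ n)`. -/
lemma tendsto_lambdaSum {a : F[X]} (ha : a.Monic) (χ : MulChar (AdjoinRoot a) ℂ) (hχ : χ ≠ 1) :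
    Tendsto (fun n => lambdaSum (charHom χ) n / (Nat.card F : ℂ) ^ n) atTop (𝓝 0) := by
  have := finite_adjoinRoot a ha
  have hq : (0 : ℝ) < Nat.card F := by exact_mod_cast Nat.card_pos
  have hqC : (Nat.card F : ℂ) ≠ 0 := by exact_mod_cast Nat.card_pos.ne'
  have hψ : ∀ f, ‖charHom χ f‖ ≤ 1 := fun f => mulChar_norm_le_one χ _
  set L : ℂ[X] := ∑ n ∈ Finset.range a.natDegree,
    monomial n (lCoeff (charHom χ) n / (Nat.card F : ℂ) ^ n) with hL
  have hcoeff : ∀ n, L.coeff n = lCoeff (charHom χ) n / (Nat.card F : ℂ) ^ n := by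
    intro n
    rw [hL, finsetSum_coeff]
    simp only [coeff_monomial, Finset.sum_ite_eq', Finset.mem_range]
    split_ifs with h
    · rfl
    · rw [lCoeff_charHom ha χ hχ n (not_lt.1 h), zero_div]
  refine tendsto_zero_of_logDeriv L _ ?_ ?_ ?_ ?_ ?_
  · rw [hcoeff, lCoeff_zero, pow_zero, div_one]
  · rw [lambdaSum_zero, zero_div]
  · intro n
    rw [norm_div, norm_pow, Complex.norm_natCast]
    exact div_le_one_of_le₀ (norm_lambdaSum_le _ hψ n) (by positivity)
  · rw [logDeriv_iff]
    intro n
    rw [hcoeff, mul_div_assoc', newton, ← Finset.Nat.sum_antidiagonal_swap,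
      Finset.Nat.sum_antidiagonal_eq_sum_range_succ_mk, Finset.sum_div]
    refine Finset.sum_congr rfl fun k hk => ?_
    have hk := Finset.mem_range_succ_iff.1 hk
    simp only [Prod.swap_prod_mk, hcoeff]
    rw [div_mul_div_comm, ← pow_add, Nat.sub_add_cancel hk, mul_comm]
  · intro w hw M
    by_contra! hcon
    -- all terms of the average must be equal to `-1`, in particular the one for `X ^ n`
    have key : ∀ n, M < n → (w * charHom χ X) ^ n = -1 := by
      intro n hn
      have hb : ∀ p : F[X] × ℕ, ‖w ^ n * charHom χ p.1 ^ p.2‖ ≤ 1 := fun p => by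
        rw [norm_mul, norm_pow, hw, one_pow, one_mul, norm_pow]
        exact pow_le_one₀ (norm_nonneg _) (hψ _)
      have h1 : ∑ p ∈ primePowers F n,
          (p.1.natDegree : ℝ) * (1 + (w ^ n * charHom χ p.1 ^ p.2).re) = 0 := by
        simp only [mul_add, mul_one, Finset.sum_add_distrib]
        rw [sum_natDegree_primePowers n (by omega)]
        have h2 : ∑ p ∈ primePowers F n,
            (p.1.natDegree : ℝ) * (w ^ n * charHom χ p.1 ^ p.2).re
            = (w ^ n * lambdaSum (charHom χ) n).re := by
          rw [lambdaSum, Finset.mul_sum, Complex.re_sum]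
          refine Finset.sum_congr rfl fun p _ => ?_
          rw [← Complex.re_ofReal_mul]
          congr 1
          push_cast
          ring
        have h3 := hcon n hn
        have h4 : w ^ n * lambdaSum (charHom χ) n = (((Nat.card F : ℝ) ^ n : ℝ) : ℂ) *
            (w ^ n * (lambdaSum (charHom χ) n / (Nat.card F : ℂ) ^ n)) := by
          push_cast
          field_simp
        rw [h2, h4, Complex.re_ofReal_mul, h3]
        ring
      have hre : ∀ p : F[X] × ℕ, 0 ≤ 1 + (w ^ n * charHom χ p.1 ^ p.2).re := fun p => by
        have := (Complex.abs_re_le_norm _).trans (hb p)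
        linarith [neg_abs_le (w ^ n * charHom χ p.1 ^ p.2).re]
      have h5 := (Finset.sum_eq_zero_iff_of_nonneg fun p _ =>
        mul_nonneg (Nat.cast_nonneg _) (hre p)).1 h1 (X, n) (by
          rw [mem_primePowers]
          exact ⟨monic_X, irreducible_X, by omega, by simp⟩)
      simp only [natDegree_X, Nat.cast_one, one_mul] at h5
      have h6 := hb (X, n)
      simp only at h6
      rw [← mul_pow] at h5 h6
      have h7 : ((w * charHom χ X) ^ n).re = -1 := by linarith
      have h8 : ‖(w * charHom χ X) ^ n‖ ^ 2 ≤ 1 := pow_le_one₀ (norm_nonneg _) h6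
      rw [Complex.sq_norm, Complex.normSq_apply, h7] at h8
      refine Complex.ext (by simpa using h7) ?_
      have : ((w * charHom χ X) ^ n).im = 0 := by nlinarith
      simpa using this
    have h1 := key (M + 1) (by omega)
    have h2 := key ((M + 1) * 2) (by omega)
    rw [pow_mul, h1] at h2
    norm_num at h2

lemma sum_mulChar {R : Type*} [CommRing R] [Finite R] [Fintype (MulChar R ℂ)] [DecidableEq R]
    (x : R) :
    ∑ χ : MulChar R ℂ, χ x = if x = 1 then (Fintype.card (MulChar R ℂ) : ℂ) else 0 := by
  split_ifs with hx
  · simp [hx]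
  · have : NeZero (Monoid.exponent Rˣ : ℂ) := ⟨by
      exact_mod_cast Monoid.exponent_ne_zero_of_finite⟩
    obtain ⟨χ, hχ⟩ := MulChar.exists_apply_ne_one_of_hasEnoughRootsOfUnity R ℂ hx
    refine eq_zero_of_mul_eq_self_left hχ ?_
    simp only [Finset.mul_sum, ← MulChar.mul_apply]
    exact Fintype.sum_bijective _ (Group.mulLeft_bijective χ) _ _ fun χ' => rfl

/-- There are at most `q` prime powers `P ^ j` of degree `n` with `P` linear. -/
lemma sum_linear_le (n : ℕ) (B : ℝ) (hB : 0 ≤ B) :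
    ∑ p ∈ primePowers F n, (if p.1.natDegree = 1 then B else 0) ≤ Nat.card F * B := by
  rw [← Finset.sum_filter, Finset.sum_const, nsmul_eq_mul]
  refine mul_le_mul_of_nonneg_right ?_ hB
  have h := card_monics (F := F) 1
  rw [pow_one] at h
  rw [← h]
  have : ((primePowers F n).filter fun p => p.1.natDegree = 1).card ≤ (monics F 1).card := by
    refine Finset.card_le_card_of_injOn Prod.fst ?_ ?_
    · intro p hp
      rw [Finset.mem_coe, Finset.mem_filter, mem_primePowers] at hp
      rw [Finset.mem_coe, mem_monics]
      exact ⟨hp.1.1, hp.2⟩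
    · rintro ⟨P, j⟩ hp ⟨P', j'⟩ hp' heq
      rw [Finset.mem_coe, Finset.mem_filter, mem_primePowers] at hp hp'
      simp only at hp hp' heq
      have h1 := hp.1.2.2.2
      have h2 := hp'.1.2.2.2
      rw [hp.2, one_mul] at h1
      rw [hp'.2, one_mul] at h2
      rw [heq, h1, h2]
  exact_mod_cast this

/-- Dirichlet's theorem for `F[X]`, in prime degrees: for `a` and `r` coprime and every large
enough prime `n`, there is a monic irreducible polynomial of degree `n` congruent to `r`
modulo `a`. -/
theorem exists_prime_modEq (a r : F[X]) (ha : a.Monic) (h : IsCoprime a r) :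
    ∃ N : ℕ, ∀ n, N ≤ n → n.Prime → ∃ P : F[X], P.Monic ∧ Irreducible P ∧ P.natDegree = n ∧
      a ∣ P - r := by
  classical
  have := finite_adjoinRoot a ha
  have := Fintype.ofFinite (MulChar (AdjoinRoot a) ℂ)
  have hq1 : (1 : ℝ) < Nat.card F := by exact_mod_cast Finite.one_lt_card
  obtain ⟨v, hv⟩ : ∃ v : AdjoinRoot a, v * AdjoinRoot.mk a r = 1 := by
    obtain ⟨x, y, hxy⟩ := h
    refine ⟨AdjoinRoot.mk a y, ?_⟩
    rw [← map_mul, ← map_one (AdjoinRoot.mk a), AdjoinRoot.mk_eq_mk]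
    exact ⟨-x, by linear_combination hxy⟩
  set K : ℝ := (Fintype.card (MulChar (AdjoinRoot a) ℂ) : ℝ) with hK
  have hlim : Tendsto (fun n : ℕ => (1 + K) * Nat.card F * ((Nat.card F : ℝ)⁻¹) ^ n +
      ∑ χ ∈ Finset.univ.erase (1 : MulChar (AdjoinRoot a) ℂ),
        ‖lambdaSum (charHom χ) n / (Nat.card F : ℂ) ^ n‖) atTop (𝓝 0) := by
    have h1 := (tendsto_pow_atTop_nhds_zero_of_lt_one (inv_nonneg.2 (by linarith))
      (inv_lt_one_of_one_lt₀ hq1)).const_mul ((1 + K) * Nat.card F)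
    have h2 : Tendsto (fun n : ℕ => ∑ χ ∈ Finset.univ.erase (1 : MulChar (AdjoinRoot a) ℂ),
        ‖lambdaSum (charHom χ) n / (Nat.card F : ℂ) ^ n‖) atTop
        (𝓝 (∑ χ ∈ Finset.univ.erase (1 : MulChar (AdjoinRoot a) ℂ), 0)) :=
      tendsto_finsetSum _ fun χ hχ => by
        simpa using (tendsto_lambdaSum ha χ (Finset.ne_of_mem_erase hχ)).norm
    simpa using h1.add h2
  obtain ⟨N, hN⟩ := eventually_atTop.1 (hlim.eventually (gt_mem_nhds zero_lt_one))
  refine ⟨max N (a.natDegree + 1), fun n hn hnp => ?_⟩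
  have hN := hN n (le_of_max_le_left hn)
  have hna : a.natDegree < n := le_of_max_le_right hn
  have hn0 : 0 < n := hnp.pos
  by_contra! hcon
  have hqn : (0 : ℝ) < (Nat.card F : ℝ) ^ n := by positivity
  have hpp : ∀ p ∈ primePowers F n, p.1.natDegree = 1 ∨ p.1.natDegree = n ∧ p.2 = 1 := by
    intro p hp
    rw [mem_primePowers] at hp
    have h4 := hp.2.2.2
    rcases (Nat.dvd_prime hnp).1 (Dvd.intro _ h4) with h5 | h5
    · exact Or.inl h5
    · rw [h5] at h4
      exact Or.inr ⟨h5, by simpa [hn0.ne'] using h4⟩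
  -- by orthogonality only the powers of linear primes contribute
  have hT : ‖∑ χ : MulChar (AdjoinRoot a) ℂ, χ v * lambdaSum (charHom χ) n‖
      ≤ Nat.card F * K := by
    simp only [lambdaSum, Finset.mul_sum]
    rw [Finset.sum_comm]
    refine le_trans (norm_sum_le_of_le _ fun p hp => ?_) (sum_linear_le n K (by positivity))
    have h1 : ∑ χ : MulChar (AdjoinRoot a) ℂ, χ v * ((p.1.natDegree : ℂ) * charHom χ p.1 ^ p.2)
        = (p.1.natDegree : ℂ) * ∑ χ : MulChar (AdjoinRoot a) ℂ,
          χ (v * AdjoinRoot.mk a (p.1 ^ p.2)) := by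
      rw [Finset.mul_sum]
      refine Finset.sum_congr rfl fun χ _ => ?_
      rw [charHom_apply, map_mul, map_pow, map_pow]
      ring
    rw [h1, sum_mulChar]
    rcases hpp p hp with h2 | ⟨h2, h3⟩
    · rw [if_pos h2, h2]
      split_ifs
      · simp [hK]
      · simp [hK]
    · rw [if_neg, mul_zero, norm_zero]
      · split_ifs <;> positivity
      · intro h4
        rw [mem_primePowers] at hp
        refine hcon p.1 hp.1 hp.2.1 h2 ?_
        rw [← AdjoinRoot.mk_eq_mk]
        rw [h3, pow_one] at h4
        calc AdjoinRoot.mk a p.1 = (v * AdjoinRoot.mk a r) * AdjoinRoot.mk a p.1 := by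
              rw [hv, one_mul]
          _ = (v * AdjoinRoot.mk a p.1) * AdjoinRoot.mk a r := by ring
          _ = AdjoinRoot.mk a r := by rw [h4, one_mul]
  -- the trivial character only misses the primes dividing `a`
  have h1 : ‖(Nat.card F : ℂ) ^ n - lambdaSum (charHom (1 : MulChar (AdjoinRoot a) ℂ)) n‖
      ≤ Nat.card F * 1 := by
    rw [← lambdaSum_one n hn0, lambdaSum, lambdaSum, ← Finset.sum_sub_distrib]
    refine le_trans (norm_sum_le_of_le _ fun p hp => ?_) (sum_linear_le n 1 zero_le_one)
    rw [MonoidHom.one_apply, one_pow, ← mul_sub]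
    have hp' := mem_primePowers.1 hp
    by_cases hpa : p.1 ∣ a
    · have hle := natDegree_le_of_dvd hpa ha.ne_zero
      rcases hpp p hp with h2 | ⟨h2, h3⟩
      · have hu : ¬ IsUnit (AdjoinRoot.mk a p.1) := by
          rintro hu
          obtain ⟨x, hx⟩ := hu.exists_left_inv
          obtain ⟨g, rfl⟩ := AdjoinRoot.mk_surjective x
          rw [← map_mul, ← map_one (AdjoinRoot.mk a), AdjoinRoot.mk_eq_mk] at hx
          have h3 : p.1 ∣ 1 := (dvd_sub_right (dvd_mul_left p.1 g)).1 (hpa.trans hx)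
          exact hp'.2.1.not_isUnit (isUnit_of_dvd_one h3)
        rw [if_pos h2, h2, charHom_apply, MulChar.map_nonunit _ hu, zero_pow hp'.2.2.1.ne']
        simp
      · omega
    · have hu : IsUnit (AdjoinRoot.mk a p.1) := by
        obtain ⟨x, y, hxy⟩ := (hp'.2.1.coprime_iff_not_dvd).2 hpa
        refine IsUnit.of_mul_eq_one_right (AdjoinRoot.mk a x) ?_
        rw [← map_mul, ← map_one (AdjoinRoot.mk a), AdjoinRoot.mk_eq_mk]
        exact ⟨-y, by linear_combination hxy⟩
      rw [charHom_apply, MulChar.one_apply hu, one_pow, sub_self, mul_zero, norm_zero]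
      split_ifs <;> norm_num
  have hv1 : (1 : MulChar (AdjoinRoot a) ℂ) v = 1 :=
    MulChar.one_apply (IsUnit.of_mul_eq_one _ hv)
  rw [← Finset.add_sum_erase _ _ (Finset.mem_univ (1 : MulChar (AdjoinRoot a) ℂ)), hv1,
    one_mul] at hT
  set A := lambdaSum (charHom (1 : MulChar (AdjoinRoot a) ℂ)) n
  set B := ∑ χ ∈ Finset.univ.erase (1 : MulChar (AdjoinRoot a) ℂ),
    χ v * lambdaSum (charHom χ) n with hB
  have hBle : ‖B‖ ≤ (Nat.card F : ℝ) ^ n *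
      ∑ χ ∈ Finset.univ.erase (1 : MulChar (AdjoinRoot a) ℂ),
        ‖lambdaSum (charHom χ) n / (Nat.card F : ℂ) ^ n‖ := by
    rw [Finset.mul_sum]
    refine norm_sum_le_of_le _ fun χ _ => ?_
    rw [norm_mul, norm_div, norm_pow, Complex.norm_natCast, mul_div_cancel₀ _ hqn.ne']
    exact mul_le_of_le_one_left (norm_nonneg _) (mulChar_norm_le_one χ v)
  have h2 : (Nat.card F : ℝ) ^ n ≤ Nat.card F * 1 + Nat.card F * K + ‖B‖ := by
    calc (Nat.card F : ℝ) ^ n = ‖(Nat.card F : ℂ) ^ n‖ := by rw [norm_pow, Complex.norm_natCast]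
      _ = ‖((Nat.card F : ℂ) ^ n - A) + (A + B) - B‖ := by congr 1; ring
      _ ≤ ‖((Nat.card F : ℂ) ^ n - A) + (A + B)‖ + ‖B‖ := norm_sub_le _ _
      _ ≤ ‖(Nat.card F : ℂ) ^ n - A‖ + ‖A + B‖ + ‖B‖ := by gcongr; exact norm_add_le _ _
      _ ≤ _ := by gcongr
  have h3 := mul_lt_mul_of_pos_left hN hqn
  rw [mul_one, mul_add, inv_pow] at h3
  have h4 : (Nat.card F : ℝ) ^ n * ((1 + K) * Nat.card F * ((Nat.card F : ℝ) ^ n)⁻¹)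
      = (1 + K) * Nat.card F := by
    field_simp
  rw [h4] at h3
  linarith

end Dirichlet

/-! ### Reciprocity and orders modulo primes -/

section Reciprocity

open Polynomial

variable {F : Type*} [Field F]

/-- The norm of the class of `a` modulo the irreducible polynomial `P` is the resultant of `P`
and `a`. -/
lemma norm_mk_eq_resultant [Finite F] (P a : F[X]) (hP : P.Monic) (hirr : Irreducible P) :
    have := Fact.mk hirr
    Algebra.norm F (AdjoinRoot.mk P a) = resultant P a := by
  have := Fact.mk hirr
  have hfin : FiniteDimensional F (AdjoinRoot P) := (AdjoinRoot.powerBasis hP.ne_zero).finite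
  let E := AlgebraicClosure F
  apply (algebraMap F E).injective
  rw [Algebra.norm_eq_prod_embeddings F E]
  have hdeg : (P.map (algebraMap F E)).natDegree = P.natDegree := natDegree_map _
  have hadeg : (a.map (algebraMap F E)).natDegree = a.natDegree := natDegree_map _
  have hres := resultant_eq_prod_eval (P.map (algebraMap F E)) (a.map (algebraMap F E))
    a.natDegree hadeg.le (IsAlgClosed.splits _)
  rw [hdeg, resultant_map_map, (hP.map _).leadingCoeff, one_pow, one_mul] at hres
  rw [hres]
  have hsep : P.Separable := PerfectField.separable_of_irreducible hirr
  have hnd : (P.aroots E).Nodup := nodup_aroots_iff_of_splits hP.ne_zero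
    (IsAlgClosed.splits _) |>.2 hsep
  have h1 : ∀ σ : AdjoinRoot P →ₐ[F] E,
      σ (AdjoinRoot.mk P a) = (a.map (algebraMap F E)).eval (σ (AdjoinRoot.root P)) := by
    intro σ
    rw [← AdjoinRoot.aeval_eq, ← aeval_algHom_apply, eval_map_algebraMap]
  classical
  rw [Finset.prod_congr rfl fun σ _ => h1 σ]
  have h2 : ((P.map (algebraMap F E)).roots.map
      fun x => (a.map (algebraMap F E)).eval x).prod
      = ∏ x ∈ (P.aroots E).toFinset, (a.map (algebraMap F E)).eval x := by
    rw [Finset.prod, Multiset.toFinset_val, Multiset.dedup_eq_self.2 hnd]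
  rw [h2]
  refine Finset.prod_bij (fun σ _ => σ (AdjoinRoot.root P)) ?_ ?_ ?_ ?_
  · intro σ _
    rw [Multiset.mem_toFinset, mem_aroots]
    refine ⟨hP.ne_zero, ?_⟩
    rw [aeval_algHom_apply, AdjoinRoot.aeval_eq, AdjoinRoot.mk_self, map_zero]
  · intro σ _ τ _ hστ
    exact AdjoinRoot.algHom_ext hστ
  · intro x hx
    rw [Multiset.mem_toFinset, mem_aroots] at hx
    have hx' : P.eval₂ ((Algebra.ofId F E : F →ₐ[F] E) : F →+* E) x = 0 := hx.2
    exact ⟨AdjoinRoot.liftAlgHom P (Algebra.ofId F E) x hx', Finset.mem_univ _,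
      AdjoinRoot.liftAlgHom_root P _ x hx'⟩
  · intro σ _
    rfl

lemma natCard_adjoinRoot [Finite F] (P : F[X]) (hP : P.Monic) :
    Nat.card (AdjoinRoot P) = Nat.card F ^ P.natDegree := by
  have : Module.Finite F (AdjoinRoot P) := (AdjoinRoot.powerBasis' hP).finite
  rw [Module.natCard_eq_pow_finrank (K := F), (AdjoinRoot.powerBasis' hP).finrank,
    AdjoinRoot.powerBasis'_dim]

lemma dvd_pow_sub_resultant [Finite F] (P a : F[X]) (hP : P.Monic) (hirr : Irreducible P) :
    P ∣ a ^ ((Nat.card F ^ P.natDegree - 1) / (Nat.card F - 1)) - C (resultant P a) := by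
  have := Fact.mk hirr
  have : Module.Finite F (AdjoinRoot P) := (AdjoinRoot.powerBasis' hP).finite
  have : Finite (AdjoinRoot P) := Module.finite_of_finite F
  rw [← norm_mk_eq_resultant P a hP hirr, ← AdjoinRoot.mk_eq_zero, map_sub, map_pow, sub_eq_zero,
    ← natCard_adjoinRoot P hP, ← FiniteField.algebraMap_norm_eq_pow]
  rfl

lemma dvd_pow_card_sub_one [Finite F] (P a : F[X]) (hP : P.Monic) (hirr : Irreducible P)
    (ha : ¬ P ∣ a) : P ∣ a ^ (Nat.card F ^ P.natDegree - 1) - 1 := by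
  have := Fact.mk hirr
  have : Module.Finite F (AdjoinRoot P) := (AdjoinRoot.powerBasis' hP).finite
  have : Finite (AdjoinRoot P) := Module.finite_of_finite F
  have := Fintype.ofFinite (AdjoinRoot P)
  rw [← AdjoinRoot.mk_eq_zero, map_sub, map_pow, sub_eq_zero, ← natCard_adjoinRoot P hP, map_one,
    Nat.card_eq_fintype_card]
  exact FiniteField.pow_card_sub_one_eq_one _ (by rwa [Ne, AdjoinRoot.mk_eq_zero])

/-- Reciprocity: the resultant of `P` and the monic polynomial `a` is determined by the class of
`P` modulo `a`. If `P ≡ β⁻¹ b` modulo `a`, it is `± β ^ (-deg a) Res(a, b)`. -/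
lemma pow_mul_resultant_eq (a b P : F[X]) (ha : a.Monic) (β : F) (h : a ∣ C β * P - b) :
    β ^ a.natDegree * resultant P a =
      (-1) ^ (P.natDegree * a.natDegree) * resultant a b := by
  obtain ⟨t, ht⟩ := h
  have hcoef : a.coeff a.natDegree = 1 := ha
  have key : ∀ N, P.natDegree ≤ N → b.natDegree ≤ N → t.natDegree + a.natDegree ≤ N →
      β ^ a.natDegree * resultant a P = resultant a b := by
    intro N h1 h2 h3
    have e1 : resultant a P a.natDegree N = resultant a P := by
      obtain ⟨k, rfl⟩ := Nat.exists_eq_add_of_le h1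
      rw [resultant_add_right_deg _ _ _ _ _ le_rfl, hcoef, one_pow, one_mul]
    have e2 : resultant a b a.natDegree N = resultant a b := by
      obtain ⟨k, rfl⟩ := Nat.exists_eq_add_of_le h2
      rw [resultant_add_right_deg _ _ _ _ _ le_rfl, hcoef, one_pow, one_mul]
    rw [← e1, ← e2, ← resultant_C_mul_right, show C β * P = b + a * t by rw [← ht]; ring,
      resultant_add_mul_right _ _ _ _ _ h3 le_rfl]
  have := key (P.natDegree + b.natDegree + (t.natDegree + a.natDegree)) (by omega) (by omega)
    (by omega)
  rw [resultant_comm, ← this]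
  ring

/-- `(q ^ d - 1) / (q - 1)` is coprime to `q ^ e - 1` when `d ≠ e` are primes and `d > q`. -/
lemma coprime_geom (q d e : ℕ) (hq : 2 ≤ q) (hd : d.Prime) (he : e.Prime) (hde : d ≠ e)
    (hqd : q < d) : Nat.Coprime ((q ^ d - 1) / (q - 1)) (q ^ e - 1) := by
  refine Nat.coprime_of_dvd fun l hl h1 h2 => ?_
  have hgeom : (q ^ d - 1) / (q - 1) = ∑ i ∈ Finset.range d, q ^ i := (Nat.geomSum_eq hq d).symm
  have h3 : l ∣ q ^ d - 1 := h1.trans (Nat.div_dvd_of_dvd (by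
    simpa using Nat.sub_dvd_pow_sub_pow q 1 d))
  have h4 : l ∣ q - 1 := by
    have := Nat.dvd_gcd h3 h2
    rwa [Nat.pow_sub_one_gcd_pow_sub_one, (Nat.coprime_primes hd he).2 hde, pow_one] at this
  have hl1 : ((q : ℕ) : ZMod l) = 1 := by
    have : (q : ℕ) = (q - 1) + 1 := by omega
    rw [this, Nat.cast_add, (ZMod.natCast_eq_zero_iff _ _).2 h4]
    simp
  have h5 : l ∣ d := by
    rw [← ZMod.natCast_eq_zero_iff] at h1 ⊢
    rw [hgeom] at h1
    simpa [hl1] using h1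
  have h6 : l = d := (Nat.prime_dvd_prime_iff_eq hl hd).1 h5
  have := Nat.le_of_dvd (by omega) h4
  omega

/-- Coprime positive `m`, `n` have consecutive multiples. -/
lemma exists_mul_eq_mul_add_one (m n : ℕ) (hm : 0 < m) (hn : 0 < n) (h : Nat.Coprime m n) :
    ∃ u v, m * u = n * v + 1 := by
  rcases Nat.lt_or_ge 1 n with h1 | h1
  · obtain ⟨u, hu⟩ := Nat.exists_mul_mod_eq_one_of_coprime h h1
    refine ⟨u, m * u / n, ?_⟩
    have := Nat.div_add_mod (m * u) n
    omega
  · refine ⟨1, m - 1, ?_⟩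
    obtain rfl : n = 1 := by omega
    omega

lemma dvd_pow_mul_sub_one {R : Type*} [CommRing R] {b a : R} {m : ℕ} (h : b ∣ a ^ m - 1) (u : ℕ) :
    b ∣ a ^ (m * u) - 1 := by
  rw [pow_mul]
  exact h.trans (by simpa using sub_dvd_pow_sub_pow (a ^ m) 1 u)

/-- The case in which the upper left entry is monic of positive degree congruent to `1` modulo
`q - 1`: after two elementary operations the off-diagonal entries are, up to units, primes of
distinct prime degrees `d` and `e`, and the unit in front of the first one is chosen in such a way
that `a` has norm `1` modulo that prime. -/
lemma elemProd_of_monic [Finite F] (a b c d : F[X]) (hdet : a * d - b * c = 1) (ha : a.Monic)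
    (hdeg : 0 < a.natDegree) (hmod : ∃ j, a.natDegree = (Nat.card F - 1) * j + 1) :
    ElemProd 32 (oneSum !![a, b; c, d]) := by
  have hq : 2 ≤ Nat.card F := Finite.one_lt_card
  have hab : IsCoprime a b := ⟨d, -c, by linear_combination hdet⟩
  have hac : IsCoprime a c := ⟨d, -b, by linear_combination hdet⟩
  have hβ : ∀ x : F, x ≠ 0 → x ^ a.natDegree = x := by
    intro x hx
    have := Fintype.ofFinite F
    obtain ⟨j, hj⟩ := hmod
    rw [hj, pow_succ, pow_mul, Nat.card_eq_fintype_card, FiniteField.pow_card_sub_one_eq_one x hx,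
      one_pow, one_mul]
  set β : F := (-1) ^ a.natDegree * resultant a b with hβdef
  have hβ0 : β ≠ 0 := mul_ne_zero (pow_ne_zero _ (by simp)) (resultant_ne_zero a b hab)
  have hβC : C β * C β⁻¹ = 1 := by rw [← C_mul, mul_inv_cancel₀ hβ0, C_1]
  have hcop : IsCoprime a (C β⁻¹ * b) :=
    isCoprime_mul_unit_left_right (isUnit_C.2 (IsUnit.mk0 _ (inv_ne_zero hβ0))) _ _ |>.2 hab
  obtain ⟨N₁, hN₁⟩ := exists_prime_modEq a _ ha hcop
  obtain ⟨N₂, hN₂⟩ := exists_prime_modEq a c ha hac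
  obtain ⟨n, hn, hnp⟩ := Nat.exists_infinite_primes (N₁ + Nat.card F + 1)
  obtain ⟨m, hm, hmp⟩ := Nat.exists_infinite_primes (N₂ + a.natDegree + n + 1)
  obtain ⟨P, hP, hPirr, hPdeg, hPa⟩ := hN₁ n (by omega) hnp
  obtain ⟨Q, hQ, hQirr, hQdeg, hQa⟩ := hN₂ m (by omega) hmp
  have hbP : a ∣ C β * P - b := by
    have := hPa.mul_left (C β)
    rwa [mul_sub, ← mul_assoc, hβC, one_mul] at this
  -- the norm of `a` modulo `P` is one
  have hres : resultant P a = 1 := by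
    have h1 := pow_mul_resultant_eq a b P ha β hbP
    have hodd : Odd P.natDegree := hPdeg ▸ hnp.odd_of_ne_two (by omega)
    rw [hβ β hβ0, pow_mul, hodd.neg_one_pow, ← hβdef] at h1
    exact mul_left_cancel₀ hβ0 (by rw [h1, mul_one])
  have hκ := dvd_pow_sub_resultant P a hP hPirr
  rw [hres, C_1, hPdeg] at hκ
  have hQna : ¬ Q ∣ a := fun h => by
    have := natDegree_le_of_dvd h ha.ne_zero
    omega
  have hlam := dvd_pow_card_sub_one Q a hQ hQirr hQna
  rw [hQdeg] at hlam
  have hpow : ∀ k, 0 < k → 0 < Nat.card F ^ k - 1 := fun k hk => by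
    have := Nat.one_lt_pow hk.ne' (show 1 < Nat.card F by omega)
    omega
  obtain ⟨u, v, huv⟩ := exists_mul_eq_mul_add_one _ _ (Nat.div_pos (Nat.sub_le_sub_right
      (Nat.le_self_pow hnp.ne_zero _) 1) (by omega)) (hpow m hmp.pos)
    (coprime_geom (Nat.card F) n m hq hnp hmp (by omega) (by omega))
  obtain ⟨t, ht⟩ := hbP
  obtain ⟨t', ht'⟩ := hQa
  have h30 := elemProd_thirty a (C β * P) Q (d + c * t + t' * (b + a * t)) (by
    linear_combination hdet - Q * ht - (b + a * t) * ht') (((Nat.card F ^ m - 1)) * v)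
    (by
      rw [← huv]
      have h1 : P ∣ a ^ ((Nat.card F ^ n - 1) / (Nat.card F - 1) * u) - 1 :=
        dvd_pow_mul_sub_one hκ u
      exact ((isUnit_C.2 (IsUnit.mk0 _ hβ0)).mul_left_dvd).2 h1)
    (dvd_pow_mul_sub_one hlam v)
  refine ElemProd.right (i := 1) (j := 2) (by decide) t ?_
  refine ElemProd.left (i := 2) (j := 1) (by decide) t' ?_
  rw [oneSum_fin_two] at h30 ⊢
  have e1 : !![1, 0, 0; 0, a, b; 0, c, d] * Matrix.transvection 1 2 t
      = !![1, 0, 0; 0, a, b + a * t; 0, c, d + c * t] := by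
    apply mul_transvection_fin_three
    apply forall_fin_three <;> simp [mul_comm]
  rw [e1, transvection_mul_fin_three 2 1 t' _
    !![1, 0, 0; 0, a, C β * P; 0, Q, d + c * t + t' * (b + a * t)]]
  · exact h30
  · apply forall_fin_three <;> simp
    · linear_combination ht
    · linear_combination ht'

end Reciprocity

/-! ### The bound over a finite field -/

section FiniteField

open Polynomial

variable {F : Type*} [Field F] [Finite F]

/-- If `b ≠ 0`, adding to `a` a suitable multiple of `b` by a monomial makes it monic of a large
degree congruent to `1` modulo `q - 1`. -/
lemma elemProd_of_ne_zero (a b c d : F[X]) (hdet : a * d - b * c = 1) (hb : b ≠ 0) :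
    ElemProd 33 (oneSum !![a, b; c, d]) := by
  have hq : 2 ≤ Nat.card F := Finite.one_lt_card
  have hN : a.natDegree + b.natDegree + 1
      ≤ (Nat.card F - 1) * (a.natDegree + b.natDegree + 1) :=
    Nat.le_mul_of_pos_left _ (by omega)
  set N := (Nat.card F - 1) * (a.natDegree + b.natDegree + 1) + 1 with hNdef
  set s : F[X] := C b.leadingCoeff⁻¹ * X ^ (N - b.natDegree) with hs
  have hlc : b.leadingCoeff ≠ 0 := leadingCoeff_ne_zero.2 hb
  have hbs : (b * s).Monic := by
    rw [Monic, hs, leadingCoeff_mul, leadingCoeff_mul, leadingCoeff_C, leadingCoeff_X_pow, mul_one,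
      mul_inv_cancel₀ hlc]
  have hdeg : (b * s).natDegree = N := by
    have hs0 : s ≠ 0 := right_ne_zero_of_mul hbs.ne_zero
    rw [natDegree_mul hb hs0, hs, natDegree_C_mul (inv_ne_zero hlc), natDegree_X_pow]
    omega
  have hlt : a.degree < (b * s).degree := by
    rw [degree_eq_natDegree hbs.ne_zero, hdeg]
    exact degree_le_natDegree.trans_lt (by exact_mod_cast (by omega : a.natDegree < N))
  have hmon : (a + b * s).Monic := hbs.add_of_right hlt
  have hnat : (a + b * s).natDegree = N := by
    rw [natDegree_add_eq_right_of_degree_lt hlt, hdeg]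
  have h := elemProd_of_monic (a + b * s) b (c + d * s) d (by linear_combination hdet) hmon
    (by omega) ⟨_, hnat⟩
  refine ElemProd.right (i := 2) (j := 1) (by decide) s ?_
  rw [oneSum_fin_two] at h ⊢
  rw [mul_transvection_fin_three 2 1 s _ !![1, 0, 0; 0, a + b * s, b; 0, c + d * s, d]]
  · exact h
  · apply forall_fin_three <;> simp [mul_comm]

lemma elemProd_fin_two (B : Matrix (Fin 2) (Fin 2) F[X]) (hdet : B.det = 1) :
    ElemProd 34 (oneSum B) := by
  rw [Matrix.det_fin_two] at hdet
  rw [Matrix.eta_fin_two B]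
  by_cases hb : B 0 1 = 0
  · have ha : B 0 0 ≠ 0 := fun ha => by simp [ha, hb] at hdet
    have h := elemProd_of_ne_zero (B 0 0) (B 0 1 + B 0 0) (B 1 0) (B 1 1 + B 1 0)
      (by linear_combination hdet) (by rwa [hb, zero_add])
    refine ElemProd.right (i := 1) (j := 2) (by decide) 1 ?_
    rw [oneSum_fin_two] at h ⊢
    rw [mul_transvection_fin_three 1 2 1 _
      !![1, 0, 0; 0, B 0 0, B 0 1 + B 0 0; 0, B 1 0, B 1 1 + B 1 0]]
    · exact h
    · apply forall_fin_three <;> simp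
  · exact (elemProd_of_ne_zero _ _ _ _ hdet hb).mono (by norm_num)

lemma elemProd_of_finite (n : ℕ) (hn : 3 ≤ n) (M : Matrix (Fin n) (Fin n) F[X])
    (hdet : M.det = 1) : ElemProd ((3 * n ^ 2 - n) / 2 + 29) M := by
  induction n, hn using Nat.le_induction with
  | base => exact reduce le_rfl M hdet elemProd_fin_two
  | succ n hn ih =>
    refine (reduce (by omega) M hdet fun B hB => (ih B hB).oneSum).mono ?_
    have h1 : 3 * (n + 1) ^ 2 - (n + 1) = 3 * n ^ 2 - n + 2 * (3 * n + 1) := by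
      have : n ≤ 3 * n ^ 2 := by nlinarith
      zify [this, show n + 1 ≤ 3 * (n + 1) ^ 2 by nlinarith]
      ring
    rw [h1, Nat.add_mul_div_left _ _ two_pos]
    omega

end FiniteField

/-! ### Descent to a finite field -/

section Descent

open Polynomial

/-- A matrix over `F[X]` has coefficients in a finite subfield when `F` is algebraic over a finite
field. -/
lemma elemProd_of_isAlgebraic {k F : Type*} [Field k] [Finite k] [Field F] [Algebra k F]
    [Algebra.IsAlgebraic k F] (n : ℕ) (hn : 3 ≤ n) (M : Matrix (Fin n) (Fin n) F[X])
    (hdet : M.det = 1) : ElemProd ((3 * n ^ 2 - n) / 2 + 29) M := by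
  classical
  let S : Finset F := Finset.univ.biUnion fun p : Fin n × Fin n => (M p.1 p.2).coeffs
  let K := IntermediateField.adjoin k (S : Set F)
  have hK : FiniteDimensional k K := IntermediateField.finiteDimensional_adjoin fun x _ =>
    Algebra.IsIntegral.isIntegral x
  have : Finite K := Module.finite_of_finite k
  have hlift : ∀ i j, ∃ f : K[X], f.map (algebraMap K F) = M i j := by
    intro i j
    rw [← mem_lifts, lifts_iff_coeff_lifts]
    intro m
    by_cases h0 : (M i j).coeff m = 0
    · exact ⟨0, by rw [map_zero, h0]⟩
    · have hmem : (M i j).coeff m ∈ K := IntermediateField.subset_adjoin k _ (by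
        rw [Finset.mem_coe, Finset.mem_biUnion]
        exact ⟨(i, j), Finset.mem_univ _, coeff_mem_coeffs h0⟩)
      exact ⟨⟨_, hmem⟩, rfl⟩
  choose N hN using hlift
  have hNM : (Matrix.of N).map (mapRingHom (algebraMap K F)) = M := by
    ext1 i j
    exact hN i j
  have hNdet : (Matrix.of N).det = 1 := by
    apply map_injective (algebraMap K F) (algebraMap K F).injective
    rw [← coe_mapRingHom, RingHom.map_det, RingHom.mapMatrix_apply, hNM, hdet, map_one]
  rw [← hNM]
  exact (elemProd_of_finite n hn _ hNdet).map _

end Descent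

/-- Let `F` be a field that is an algebraic extension of a finite field, i.e. `F` has
prime characteristic `p` and every element of `F` is algebraic over the prime subfield
`𝔽_p = ZMod p`.  Then for `n ≥ 3`, every matrix in `SL_n(F[X])` is a product of at most
`(3n² - n)/2 + 29` elementary matrices. -/
theorem sl_n_polynomial_algebraic_field_bounded_elementary_generation
    (F : Type*) [Field F] (p : ℕ) (hp : p.Prime) [CharP F p]
    (halg : ∀ x : F, ∃ f : Polynomial (ZMod p), f ≠ 0 ∧
      Polynomial.eval₂ (ZMod.castHom (dvd_refl p) F) x f = 0)
    (n : ℕ) (hn : 3 ≤ n) :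
    ∀ M : Matrix.SpecialLinearGroup (Fin n) (Polynomial F),
      ∃ L : List (Matrix.SpecialLinearGroup (Fin n) (Polynomial F)),
        L.length ≤ (3 * n ^ 2 - n) / 2 + 29 ∧ (∀ E ∈ L, IsElementary E) ∧ L.prod = M := by
  intro M
  have := Fact.mk hp
  let _ : Algebra (ZMod p) F := (ZMod.castHom (dvd_refl p) F).toAlgebra
  have : Algebra.IsAlgebraic (ZMod p) F := ⟨fun x => by
    obtain ⟨f, hf, hx⟩ := halg x
    exact ⟨f, hf, hx⟩⟩
  obtain ⟨L, hL, hLE, hLM⟩ := elemProd_of_isAlgebraic (k := ZMod p) n hn M.1 M.2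
  have hdet : ∀ E ∈ L, E.det = 1 := by
    intro E hE
    obtain ⟨i, j, c, hij, rfl⟩ := hLE E hE
    exact Matrix.det_transvection_of_ne i j hij c
  let lift (E : Matrix (Fin n) (Fin n) (Polynomial F)) (hE : E.det = 1) :
      Matrix.SpecialLinearGroup (Fin n) (Polynomial F) := ⟨E, hE⟩
  have hprod : ∀ (L : List (Matrix (Fin n) (Fin n) (Polynomial F))) (h : ∀ E ∈ L, E.det = 1),
      ((L.pmap lift h).prod : Matrix (Fin n) (Fin n) (Polynomial F)) = L.prod := by
    intro L
    induction L with
    | nil => intro _; rfl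
    | cons E L ih =>
      intro h
      rw [List.pmap_cons, List.prod_cons, List.prod_cons, Matrix.SpecialLinearGroup.coe_mul, ih]
  refine ⟨L.pmap lift hdet, by rw [List.length_pmap]; exact hL, ?_, ?_⟩
  · intro E hE
    obtain ⟨A, hA, rfl⟩ := List.mem_pmap.1 hE
    exact hLE A hA
  · apply Subtype.ext
    rw [← hLM]
    exact hprod L hdet
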